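/- arXiv:2311.15002 — 2 statements merged into one kernel-verified Lean document; each statement's English description precedes it below -/
import Mathlib

section
/- Let g ≥ 2 be an integer and ε > 0. There exist constants c > 0 and C > 0 depending only on g and ε such that for all integers N ≥ 0 and all real Q with 1 ≤ Q ≤ g^{(4/5−ε)N}: ∑_{1 ≤ q ≤ Q, gcd(q, g³−g)=1} q^{−1/2} · max_{a, k ∈ ℤ} |#Π_{k,g}(2N+1; a, q) − (1/q)·#Π_{k,g}(2N+1)| ≤ C·g^{N − c√N}. -/
/-!
The estimate is a sum over moduli `q`, split at `g ^ J` with `J ≈ γ √N`. A palindrome of length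
`2N + 1` is `∑ x i * wt g N i` with `N + 1` free digits, the digit `x i` (`i < N`) having weight
`g ^ i + g ^ (2N - i)`.

*Small moduli.* Both congruences are detected with additive characters, which leaves the
exponential sums over palindromes at `θ = h / q + b / (g³ - g)`, `h ≢ 0 mod q`
(`discrepancy_le`). Such a sum factors over the free digits (`sum_Palins_e`). If two consecutive
phases `x i = θ (g ^ i + g ^ (2N - i))` and `x (i + 1)` are both close to integers, then so is
`g * x i - x (i + 1) ≡ h (g³ - g) g ^ (2N - i - 2) / q mod 1`; but the right-hand side is expanded
by `g` from step to step and is at least `1 / q` away from the integers, so this fails somewhere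
in every window of `J + 1` digits. Each window thus saves a constant factor
(`exists_exp_sum_le`), altogether `ρ ^ (N / (J + 1))`.

*Large moduli.* No cancellation is needed: it suffices to bound the number of palindromes in a
residue class, on average over `q` in `[g ^ j, g ^ (j + 1))`. Only the two innermost blocks of
`K = ⌊5j/8⌋` digits are used. By the inequality of the arithmetic and geometric means, the number
of pairs of blocks with a prescribed sum modulo `q` is at most the number of pairs of values
within one block that agree modulo `q` (`card_add_eq_le`). On average over `q` these collisions
are few: a nonzero difference is bounded by `g ^ (4K + 2)` once its power of `g` is removed, and
so has few divisors (`sum_coll_le`, `exists_card_divisors_le`). This saves `g ^ (-j / 8)` for all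
`j ≤ 4N / 5` (`exists_block_le`), and the savings are summed as a geometric series.
-/

open Finset

/-- The set of palindromes of base `g` of length `N`. -/
def Palins (g N : ℕ) : Finset ℕ :=
  (Finset.Ico 1 (g ^ N)).filter
    (fun n => (Nat.digits g n).length = N ∧ (Nat.digits g n).reverse = Nat.digits g n)

/-- `Π_{k,g}(N)`: palindromes of length `N` congruent to `k` modulo `g³ - g`. -/
def PalinsKg (g N : ℕ) (k : ℤ) : Finset ℕ :=
  (Palins g N).filter (fun n => (n : ℤ) % ((g : ℤ) ^ 3 - g) = k % ((g : ℤ) ^ 3 - g))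

/-- `Π_{k,g}(N; a, q)`: members of `Π_{k,g}(N)` congruent to `a` modulo `q`. -/
def PalinsKgMod (g N : ℕ) (k a : ℤ) (q : ℕ) : Finset ℕ :=
  (PalinsKg g N k).filter (fun n => (n : ℤ) % (q : ℤ) = a % (q : ℤ))

namespace PalinBV

/-! ### Palindromes in terms of their free digits -/

/-- The weight of the `i`-th free digit of a palindrome of length `2N+1`: the digit occupies the
mirrored positions `i` and `2N - i`, which coincide for the middle digit `i = N`. -/
def wt (g N i : ℕ) : ℕ := if i < N then g ^ i + g ^ (2 * N - i) else g ^ N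

/-- The values allowed for the `i`-th free digit; only the outermost one has to be nonzero. -/
def digSet (g i : ℕ) : Finset ℕ := if i = 0 then Finset.Ico 1 g else Finset.range g

/-- The palindrome of length `2N+1` whose free digits, from the outermost to the middle one,
are `x 0, …, x N`. -/
def palVal (g N : ℕ) (x : Fin (N + 1) → ℕ) : ℕ := ∑ i, x i * wt g N i

lemma lt_of_mem_digSet {g i a : ℕ} (h : a ∈ digSet g i) : a < g := by
  unfold digSet at h; split_ifs at h
  · exact (Finset.mem_Ico.mp h).2
  · exact Finset.mem_range.mp h

lemma ofDigits_eq_sum (g : ℕ) (L : List ℕ) :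
    Nat.ofDigits g L = ∑ i ∈ range L.length, L.getD i 0 * g ^ i := by
  induction L with
  | nil => simp
  | cons a L ih =>
    rw [Nat.ofDigits_cons, ih, List.length_cons, Finset.sum_range_succ', Finset.mul_sum, add_comm]
    simp only [List.getD_cons_succ, List.getD_cons_zero, pow_zero, mul_one]
    congr 1
    exact Finset.sum_congr rfl fun i _ => by ring

/-- Folding a symmetric digit expansion onto its free digits. -/
lemma sum_symm (g N : ℕ) (d : ℕ → ℕ) (hd : ∀ i < N, d (2 * N - i) = d i) :
    ∑ i ∈ range (2 * N + 1), d i * g ^ i = ∑ i ∈ range (N + 1), d i * wt g N i := by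
  have h1 : 2 * N + 1 = (N + 1) + N := by ring
  rw [h1, Finset.sum_range_add, Finset.sum_range_succ, Finset.sum_range_succ (n := N)]
  have h2 : ∑ x ∈ range N, d (N + 1 + x) * g ^ (N + 1 + x) =
      ∑ i ∈ range N, d i * g ^ (2 * N - i) := by
    rw [← Finset.sum_range_reflect]
    refine Finset.sum_congr rfl fun i hi => ?_
    have hi' := Finset.mem_range.mp hi
    have : N + 1 + (N - 1 - i) = 2 * N - i := by omega
    rw [this, hd i hi']
  have h3 : ∑ i ∈ range N, d i * wt g N i =
      ∑ i ∈ range N, d i * g ^ i + ∑ i ∈ range N, d i * g ^ (2 * N - i) := by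
    rw [← Finset.sum_add_distrib]
    refine Finset.sum_congr rfl fun i hi => ?_
    rw [wt, if_pos (Finset.mem_range.mp hi)]; ring
  rw [h2, h3, wt, if_neg (lt_irrefl N)]
  ring

lemma exists_digits_of_mem {g N n : ℕ} (hg : 2 ≤ g) (hn : n ∈ Palins g (2 * N + 1)) :
    ∃ d : ℕ → ℕ, (∀ i ≤ N, d i ∈ digSet g i) ∧ n = ∑ i ∈ range (N + 1), d i * wt g N i := by
  simp only [Palins, Finset.mem_filter, Finset.mem_Ico] at hn
  obtain ⟨⟨h1, _⟩, hlen, hrev⟩ := hn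
  set L := Nat.digits g n with hL
  have hlt : ∀ i, L.getD i 0 < g := by
    intro i
    rw [hL, Nat.getD_digits _ _ hg]
    exact Nat.mod_lt _ (by omega)
  have hsym : ∀ i < 2 * N + 1, L.getD (2 * N - i) 0 = L.getD i 0 := by
    intro i hi
    conv_rhs => rw [← hrev]
    rw [List.getD_eq_getElem _ _ (by omega), List.getD_eq_getElem _ _ (by simpa using by omega),
      List.getElem_reverse]
    congr 1; omega
  refine ⟨fun i => L.getD i 0, fun i _ => ?_, ?_⟩
  · unfold digSet
    split_ifs with h
    · subst h
      refine Finset.mem_Ico.mpr ⟨Nat.pos_of_ne_zero ?_, hlt 0⟩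
      have hne : L ≠ [] := by intro h0; simp [h0] at hlen
      have hlast := Nat.getLast_digit_ne_zero g (m := n) (by omega)
      have h0 := hsym 0 (by omega)
      change L.getD 0 0 ≠ 0
      rw [← h0, List.getD_eq_getElem _ _ (by omega)]
      rw [List.getLast_eq_getElem] at hlast
      have : L.length - 1 = 2 * N - 0 := by omega
      simpa only [← hL, this] using hlast
    · exact Finset.mem_range.mpr (hlt i)
  · rw [← sum_symm g N _ fun i hi => hsym i (by omega), ← hlen, ← ofDigits_eq_sum,
      hL, Nat.ofDigits_digits]

lemma sum_mem_Palins {g N : ℕ} (hg : 2 ≤ g) (d : ℕ → ℕ) (hd : ∀ i ≤ N, d i ∈ digSet g i) :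
    ∑ i ∈ range (N + 1), d i * wt g N i ∈ Palins g (2 * N + 1) := by
  -- the symmetric extension of the free digits to all `2N+1` positions
  set y : ℕ → ℕ := fun j => if j ≤ N then d j else d (2 * N - j) with hy
  have hy1 : ∑ i ∈ range (N + 1), d i * wt g N i = ∑ i ∈ range (2 * N + 1), y i * g ^ i := by
    rw [sum_symm g N y]
    · refine Finset.sum_congr rfl fun i hi => ?_
      have := Finset.mem_range.mp hi
      simp only [hy]; rw [if_pos (by omega)]
    · intro i hi
      simp only [hy]
      rw [if_neg (by omega), if_pos (by omega)]
      congr 1; omega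
  set L : List ℕ := (List.range (2 * N + 1)).map y with hL
  have hlen : L.length = 2 * N + 1 := by simp [hL]
  have hval : ∑ i ∈ range (N + 1), d i * wt g N i = Nat.ofDigits g L := by
    rw [hy1, ofDigits_eq_sum, hlen]
    refine Finset.sum_congr rfl fun i hi => ?_
    rw [List.getD_eq_getElem _ _ (by rw [hlen]; exact Finset.mem_range.mp hi)]
    simp [hL]
  have hylt : ∀ j < 2 * N + 1, y j < g := by
    intro j hj
    simp only [hy]
    split_ifs with h
    · exact lt_of_mem_digSet (hd j h)
    · exact lt_of_mem_digSet (hd _ (by omega))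
  have hdig : Nat.digits g (Nat.ofDigits g L) = L := by
    refine Nat.digits_ofDigits g (by omega) L ?_ ?_
    · intro l hl
      simp only [hL, List.mem_map, List.mem_range] at hl
      obtain ⟨j, hj, rfl⟩ := hl
      exact hylt j hj
    · intro h
      rw [List.getLast_eq_getElem]
      simp only [hL, List.getElem_map, List.getElem_range, List.length_map, List.length_range]
      have h0 := hd 0 (by omega)
      rw [digSet, if_pos rfl, Finset.mem_Ico] at h0
      have : y (2 * N + 1 - 1) = d 0 := by
        simp only [hy]
        split_ifs with h
        · congr 1; omega
        · congr 1; omega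
      omega
  rw [hval, Palins, Finset.mem_filter, hdig, Finset.mem_Ico]
  refine ⟨⟨?_, ?_⟩, hlen, ?_⟩
  · refine Nat.pos_of_ne_zero fun h0 => ?_
    rw [h0] at hdig
    simp only [Nat.digits_zero] at hdig
    rw [← hdig] at hlen; simp at hlen
  · rw [← hlen]
    exact Nat.ofDigits_lt_base_pow_length (by omega) (fun l hl => by
      simp only [hL, List.mem_map, List.mem_range] at hl
      obtain ⟨j, hj, rfl⟩ := hl
      exact hylt j hj)
  · refine List.ext_getElem (by simp) fun i h1 h2 => ?_
    rw [List.getElem_reverse]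
    simp only [hL, List.getElem_map, List.getElem_range, List.length_map, List.length_range, hy]
    rw [hlen] at h2
    split_ifs <;> congr 1 <;> omega

lemma Palins_eq_image {g : ℕ} (N : ℕ) (hg : 2 ≤ g) :
    Palins g (2 * N + 1) =
      (Fintype.piFinset fun i : Fin (N + 1) => digSet g i).image (palVal g N) := by
  ext n
  simp only [Finset.mem_image, Fintype.mem_piFinset]
  constructor
  · intro hn
    obtain ⟨d, hd, rfl⟩ := exists_digits_of_mem hg hn
    refine ⟨fun i => d i, fun i => hd i (by omega), ?_⟩
    rw [palVal, Finset.sum_range]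
  · rintro ⟨x, hx, rfl⟩
    have := sum_mem_Palins (N := N) hg (fun i => if h : i < N + 1 then x ⟨i, h⟩ else 0)
      (fun i hi => by
        rw [dif_pos (by omega)]
        exact hx ⟨i, by omega⟩)
    rw [Finset.sum_range] at this
    simpa only [palVal, Fin.is_lt, dite_true, Fin.eta] using this

/-- The free digits can be read off modulo `g ^ (N + 1)`. -/
lemma palVal_injOn {g : ℕ} (N : ℕ) :
    Set.InjOn (palVal g N) (Fintype.piFinset fun i : Fin (N + 1) => digSet g i) := by
  have key : ∀ x ∈ Fintype.piFinset fun i : Fin (N + 1) => digSet g i,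
      ∃ f : Fin (N + 1) → Fin g, (∀ i, (f i : ℕ) = x i) ∧
        palVal g N x % g ^ (N + 1) = (finFunctionFinEquiv f : ℕ) := by
    intro x hx
    rw [Fintype.mem_piFinset] at hx
    refine ⟨fun i => ⟨x i, lt_of_mem_digSet (hx i)⟩, fun i => rfl, ?_⟩
    set f : Fin (N + 1) → Fin g := fun i => ⟨x i, lt_of_mem_digSet (hx i)⟩ with hf
    have h1 : palVal g N x ≡ (finFunctionFinEquiv f : ℕ) [MOD g ^ (N + 1)] := by
      rw [finFunctionFinEquiv_apply, palVal]
      refine Nat.ModEq.sum fun i _ => ?_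
      rw [hf]
      refine Nat.ModEq.mul_left _ ?_
      unfold wt
      split_ifs with h
      · have : g ^ (N + 1) ∣ g ^ (2 * N - i) := pow_dvd_pow _ (by omega)
        have h2 := (Nat.modEq_zero_iff_dvd.mpr this).add_left (g ^ (i : ℕ))
        simpa using h2
      · have : (i : ℕ) = N := by omega
        rw [this]
    have h2 := (finFunctionFinEquiv f).isLt
    rw [Nat.ModEq, Nat.mod_eq_of_lt h2] at h1
    exact h1
  intro x hx y hy hxy
  obtain ⟨f, hf, hf'⟩ := key x hx
  obtain ⟨f', hg, hg'⟩ := key y hy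
  rw [hxy, hg'] at hf'
  have := finFunctionFinEquiv.injective (Fin.ext hf')
  funext i
  rw [← hf, ← hg, this]

lemma card_Palins_le {g : ℕ} (N : ℕ) (hg : 2 ≤ g) : (Palins g (2 * N + 1)).card ≤ g ^ (N + 1) := by
  rw [Palins_eq_image N hg]
  refine Finset.card_image_le.trans ?_
  rw [Fintype.card_piFinset]
  calc _ ≤ ∏ _i : Fin (N + 1), g := Finset.prod_le_prod' fun i _ => by
        unfold digSet; split_ifs <;> simp
    _ = _ := by simp

/-! ### The divisor bound -/

/-- The divisor bound `τ(n) ≪ n ^ (1/20)`: in `τ(n) / n ^ (1/20) = ∏ (a_p + 1) / p ^ (a_p / 20)`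
the factors with `p ≥ 2 ^ 20` are at most `1`, and each of the boundedly many others is bounded. -/
lemma exists_card_divisors_le :
    ∃ C : ℝ, 0 < C ∧ ∀ n : ℕ, n ≠ 0 → (n.divisors.card : ℝ) ≤ C * (n : ℝ) ^ (1 / 20 : ℝ) := by
  set s : ℝ := (2 : ℝ) ^ (1 / 20 : ℝ) with hs
  have hs1 : 1 < s := Real.one_lt_rpow (by norm_num) (by norm_num)
  set C₀ : ℝ := 1 + 1 / (s - 1) with hC₀
  have hpos : 0 < s - 1 := by linarith
  have hC₀1 : 1 ≤ C₀ := by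
    have : 0 < 1 / (s - 1) := by positivity
    linarith
  refine ⟨C₀ ^ (2 ^ 20), by positivity, fun n hn => ?_⟩
  have hfac : (n : ℝ) ^ (1 / 20 : ℝ) =
      ∏ p ∈ n.primeFactors, ((p : ℝ) ^ (1 / 20 : ℝ)) ^ (n.factorization p) := by
    conv_lhs => rw [← Nat.prod_factorization_pow_eq_self hn]
    rw [Finsupp.prod, Nat.support_factorization]
    push_cast
    rw [← Real.finsetProd_rpow _ _ (fun i _ => by positivity)]
    refine Finset.prod_congr rfl fun p _ => ?_
    rw [← Real.rpow_natCast, ← Real.rpow_natCast, ← Real.rpow_mul (by positivity),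
      ← Real.rpow_mul (by positivity), mul_comm]
  have hterm : ∀ p ∈ n.primeFactors, ((n.factorization p + 1 : ℕ) : ℝ) ≤
      (if p < 2 ^ 20 then C₀ else 1) * ((p : ℝ) ^ (1 / 20 : ℝ)) ^ (n.factorization p) := by
    intro p hp
    have hp2 : 2 ≤ p := (Nat.prime_of_mem_primeFactors hp).two_le
    set a := n.factorization p
    split_ifs with h
    · have h1 : s ≤ (p : ℝ) ^ (1 / 20 : ℝ) :=
        Real.rpow_le_rpow (by norm_num) (by exact_mod_cast hp2) (by norm_num)
      have h2 : s ^ a ≤ ((p : ℝ) ^ (1 / 20 : ℝ)) ^ a := by gcongr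
      have h3 : 1 + (a : ℝ) * (s - 1) ≤ s ^ a := by
        have := one_add_mul_le_pow (a := s - 1) (by linarith) a
        simpa using this
      have h4 : ((a + 1 : ℕ) : ℝ) ≤ C₀ * (1 + (a : ℝ) * (s - 1)) := by
        have : C₀ * (1 + (a : ℝ) * (s - 1)) = 1 + a * (s - 1) + 1 / (s - 1) + a := by
          rw [hC₀]; field_simp; ring
        rw [this]; push_cast
        have : 0 < 1 / (s - 1) := by positivity
        have : 0 ≤ (a : ℝ) * (s - 1) := by positivity
        linarith
      calc _ ≤ _ := h4
        _ ≤ _ := by gcongr; exact h3.trans h2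
    · have h1 : (2 : ℝ) ≤ (p : ℝ) ^ (1 / 20 : ℝ) := by
        have : ((2 : ℝ) ^ 20) ^ (1 / 20 : ℝ) = 2 := by
          rw [← Real.rpow_natCast, ← Real.rpow_mul (by norm_num)]; norm_num
        rw [← this]
        exact Real.rpow_le_rpow (by norm_num) (by exact_mod_cast not_lt.mp h) (by norm_num)
      have h2 : (2 : ℝ) ^ a ≤ ((p : ℝ) ^ (1 / 20 : ℝ)) ^ a := by gcongr
      have h3 : ((a + 1 : ℕ) : ℝ) ≤ 2 ^ a := by exact_mod_cast Nat.lt_two_pow_self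
      linarith
  rw [Nat.card_divisors hn, hfac]
  push_cast
  calc ∏ p ∈ n.primeFactors, ((n.factorization p : ℝ) + 1)
      ≤ ∏ p ∈ n.primeFactors, ((if p < 2 ^ 20 then C₀ else 1) *
          ((p : ℝ) ^ (1 / 20 : ℝ)) ^ (n.factorization p)) := by
        refine Finset.prod_le_prod (fun i _ => by positivity) fun p hp => ?_
        exact_mod_cast hterm p hp
    _ ≤ _ := by
        rw [Finset.prod_mul_distrib]
        gcongr
        rw [Finset.prod_ite, Finset.prod_const, Finset.prod_const_one, mul_one]
        refine pow_le_pow_right₀ hC₀1 ?_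
        calc _ ≤ (range (2 ^ 20)).card := Finset.card_le_card fun p hp => by
                simp only [Finset.mem_filter] at hp; exact Finset.mem_range.mpr hp.2
          _ = _ := Finset.card_range _

/-! ### Residue classes and collisions -/

/-- If `α x + β y = t` has many solutions, then `α` or `β` has many collisions: writing the number
of solutions as `∑ z, a z * b (t - z)` with the fibre sizes `a`, `b`, this is
`a b ≤ a ^ 2 + b ^ 2`. -/
lemma card_add_eq_le {X Y G : Type*} [Fintype X] [Fintype Y] [AddCommGroup G] [Fintype G]
    [DecidableEq G] (α : X → G) (β : Y → G) (t : G) :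
    (univ.filter fun p : X × Y => α p.1 + β p.2 = t).card ≤
      (univ.filter fun p : X × X => α p.1 = α p.2).card +
        (univ.filter fun p : Y × Y => β p.1 = β p.2).card := by
  set a : G → ℕ := fun z => (univ.filter fun x => α x = z).card with ha
  set b : G → ℕ := fun z => (univ.filter fun y => β y = z).card with hb
  have h1 : (univ.filter fun p : X × Y => α p.1 + β p.2 = t).card = ∑ z, a z * b (t - z) := by
    rw [Finset.card_eq_sum_card_fiberwise (f := fun p => α p.1) (t := univ) (by simp)]
    refine Finset.sum_congr rfl fun z _ => ?_
    rw [ha, hb, ← Finset.card_product]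
    congr 1
    ext ⟨x, y⟩
    simp only [Finset.mem_filter, Finset.mem_univ, true_and, Finset.mem_product]
    constructor
    · rintro ⟨h, h'⟩; exact ⟨h', by rw [← h', ← h]; abel⟩
    · rintro ⟨h, h'⟩; exact ⟨by rw [h, h']; abel, h⟩
  have h2 : (univ.filter fun p : X × X => α p.1 = α p.2).card = ∑ z, a z * a z := by
    rw [Finset.card_eq_sum_card_fiberwise (f := fun p => α p.1) (t := univ) (by simp)]
    refine Finset.sum_congr rfl fun z _ => ?_
    rw [ha, ← Finset.card_product]
    congr 1
    ext ⟨x, y⟩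
    simp only [Finset.mem_filter, Finset.mem_univ, true_and, Finset.mem_product]
    constructor
    · rintro ⟨h, h'⟩; exact ⟨h', by rw [← h', ← h]⟩
    · rintro ⟨h, h'⟩; exact ⟨by rw [h, h'], h⟩
  have h3 : (univ.filter fun p : Y × Y => β p.1 = β p.2).card = ∑ z, b (t - z) * b (t - z) := by
    have hre : ∑ z, b (t - z) * b (t - z) = ∑ z, b z * b z :=
      Equiv.sum_comp (Equiv.subLeft t) (fun z => b z * b z)
    rw [hre]
    rw [Finset.card_eq_sum_card_fiberwise (f := fun p => β p.1) (t := univ) (by simp)]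
    refine Finset.sum_congr rfl fun z _ => ?_
    rw [hb, ← Finset.card_product]
    congr 1
    ext ⟨x, y⟩
    simp only [Finset.mem_filter, Finset.mem_univ, true_and, Finset.mem_product]
    constructor
    · rintro ⟨h, h'⟩; exact ⟨h', by rw [← h', ← h]⟩
    · rintro ⟨h, h'⟩; exact ⟨by rw [h, h'], h⟩
  rw [h1, h2, h3, ← Finset.sum_add_distrib]
  refine Finset.sum_le_sum fun z _ => ?_
  nlinarith [two_mul_le_add_sq (a z) (b (t - z))]

/-- The contribution of `K` consecutive free digits `u` to a palindrome, with the common power of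
`g` removed; `M` is the distance from the first of these digits to the middle one. -/
def blockVal (g M K : ℕ) (u : Fin K → Fin g) : ℕ :=
  ∑ i : Fin K, (u i : ℕ) * (g ^ (i : ℕ) + g ^ (2 * M - i))

/-- The digits of a block can be read off modulo `g ^ K`. -/
lemma blockVal_injective {g M K : ℕ} (h : K ≤ M) : Function.Injective (blockVal g M K) := by
  have key : ∀ u, blockVal g M K u % g ^ K = (finFunctionFinEquiv u : ℕ) := by
    intro u
    have h1 : blockVal g M K u ≡ (finFunctionFinEquiv u : ℕ) [MOD g ^ K] := by
      rw [finFunctionFinEquiv_apply, blockVal]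
      refine Nat.ModEq.sum fun i _ => Nat.ModEq.mul_left _ ?_
      have : g ^ K ∣ g ^ (2 * M - i) := pow_dvd_pow _ (by omega)
      simpa using (Nat.modEq_zero_iff_dvd.mpr this).add_left (g ^ (i : ℕ))
    rwa [Nat.ModEq, Nat.mod_eq_of_lt (finFunctionFinEquiv u).isLt] at h1
  intro u v huv
  refine finFunctionFinEquiv.injective (Fin.ext ?_)
  rw [← key, ← key, huv]

lemma blockVal_le {g M K : ℕ} (hg : 2 ≤ g) (h : K ≤ M) (u : Fin K → Fin g) :
    blockVal g M K u ≤ g ^ (2 * M + 2) := by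
  have h1 : ∀ k : ℕ, k ≤ M → ∑ i ∈ range k, (g - 1) * (g ^ i + g ^ (2 * M - i)) + g ^ (2 * M + 1 - k)
      ≤ g ^ (2 * M + 1) + g ^ k := by
    intro k
    induction k with
    | zero => simp
    | succ k ih =>
      intro hk
      have := ih (by omega)
      rw [Finset.sum_range_succ]
      have e1 : g ^ (2 * M + 1 - k) = g * g ^ (2 * M - k) := by
        rw [← pow_succ']; congr 1; omega
      have e2 : 2 * M + 1 - (k + 1) = 2 * M - k := by omega
      obtain ⟨m, rfl⟩ : ∃ m, g = m + 1 := ⟨g - 1, by omega⟩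
      rw [e2, pow_succ' _ k]
      rw [e1] at this
      simp only [Nat.add_sub_cancel] at *
      nlinarith
  have h2 := h1 K h
  have h3 : blockVal g M K u ≤ ∑ i ∈ range K, (g - 1) * (g ^ i + g ^ (2 * M - i)) := by
    rw [blockVal, Finset.sum_range]
    exact Finset.sum_le_sum fun i _ => Nat.mul_le_mul_right _ (by omega)
  have h4 : g ^ K ≤ g ^ (2 * M + 1) := Nat.pow_le_pow_right (by omega) (by omega)
  have h5 : g ^ (2 * M + 2) = g * g ^ (2 * M + 1) := by rw [← pow_succ']
  have h6 := Nat.mul_le_mul_right (g ^ (2 * M + 1)) hg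
  omega

/-- The number of pairs of blocks whose values agree modulo `q`. -/
def coll (g M K q : ℕ) : ℕ :=
  (univ.filter fun p : (Fin K → Fin g) × (Fin K → Fin g) =>
    (blockVal g M K p.1 : ZMod q) = (blockVal g M K p.2 : ZMod q)).card

/-- Only the digits in the two innermost blocks of length `K` are exploited; the other `r + 1` free
digits are estimated trivially. -/
lemma card_residue_le {g r K N q : ℕ} (hg : 2 ≤ g) (hN : N = r + K + K) (hq : q ≠ 0)
    (hqg : Nat.Coprime q g) (a : ℤ) :
    ((Palins g (2 * N + 1)).filter fun n : ℕ => (n : ℤ) % (q : ℤ) = a % (q : ℤ)).card ≤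
      g ^ (r + 1) * (coll g (2 * K) K q + coll g K K q) := by
  classical
  have : NeZero q := ⟨hq⟩
  set P : ((Fin r → Fin g) × Fin g) × ((Fin K → Fin g) × (Fin K → Fin g)) → ℕ := fun p =>
    (∑ i, (p.1.1 i : ℕ) * (g ^ (i : ℕ) + g ^ (2 * N - i)) + p.1.2 * g ^ N) +
      (g ^ r * blockVal g (2 * K) K p.2.1 + g ^ (r + K) * blockVal g K K p.2.2) with hP
  have hsurj : Set.SurjOn P
      (univ.filter fun p => ((P p : ℕ) : ZMod q) = (a : ZMod q) : Finset _)
      ((Palins g (2 * N + 1)).filter fun n : ℕ => (n : ℤ) % (q : ℤ) = a % (q : ℤ) : Finset ℕ) := by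
    intro n hn
    rw [Finset.mem_coe, Finset.mem_filter] at hn
    obtain ⟨hn, hna⟩ := hn
    obtain ⟨d, hd, hnd⟩ := exists_digits_of_mem hg hn
    have hd' : ∀ i ≤ N, d i < g := fun i hi => lt_of_mem_digSet (hd i hi)
    have hval : P ((fun i => ⟨d i, hd' _ (by omega)⟩, ⟨d N, hd' _ le_rfl⟩),
        (fun i => ⟨d (r + i), hd' _ (by omega)⟩, fun i => ⟨d (r + K + i), hd' _ (by omega)⟩)) = n := by
      rw [hnd, Finset.sum_range_succ]
      have e : ∑ i ∈ range N, d i * wt g N i = ∑ i ∈ range N, d i * (g ^ i + g ^ (2 * N - i)) :=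
        Finset.sum_congr rfl fun i hi => by rw [wt, if_pos (Finset.mem_range.mp hi)]
      rw [e]
      have e2 : range N = range (r + K + K) := by rw [hN]
      rw [e2, Finset.sum_range_add, Finset.sum_range_add, Finset.sum_range, Finset.sum_range,
        Finset.sum_range]
      simp only [hP, blockVal, Finset.mul_sum]
      have f1 : ∀ i : Fin K, g ^ r * (d (r + i) * (g ^ (i : ℕ) + g ^ (2 * (2 * K) - i))) =
          d (r + i) * (g ^ (r + (i : ℕ)) + g ^ (2 * N - (r + i))) := by
        intro i
        have : 2 * N - (r + i) = r + (2 * (2 * K) - i) := by omega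
        rw [this, pow_add, pow_add]; ring
      have f2 : ∀ i : Fin K, g ^ (r + K) * (d (r + K + i) * (g ^ (i : ℕ) + g ^ (2 * K - i))) =
          d (r + K + i) * (g ^ (r + K + (i : ℕ)) + g ^ (2 * N - (r + K + i))) := by
        intro i
        have : 2 * N - (r + K + i) = (r + K) + (2 * K - i) := by omega
        rw [this, pow_add _ (r + K), pow_add _ (r + K)]; ring
      simp only [f1, f2, wt, lt_irrefl, if_false]
      ring
    refine ⟨_, ?_, hval⟩
    rw [Finset.mem_coe, Finset.mem_filter, hval]
    refine ⟨Finset.mem_univ _, ?_⟩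
    have := (ZMod.intCast_eq_intCast_iff (n : ℤ) a q).mpr hna
    simpa using this
  refine (Finset.card_le_card_of_surjOn P hsurj).trans ?_
  rw [Finset.card_filter, Fintype.sum_prod_type]
  have hunit : ∀ m : ℕ, IsUnit ((g ^ m : ℕ) : ZMod q) := fun m =>
    (ZMod.isUnit_iff_coprime _ _).mpr (Nat.Coprime.pow_left m hqg.symm)
  have hone : ∀ x : (Fin r → Fin g) × Fin g,
      (∑ y, if ((P (x, y) : ℕ) : ZMod q) = (a : ZMod q) then 1 else 0) ≤
        coll g (2 * K) K q + coll g K K q := by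
    intro x
    rw [← Finset.card_filter]
    have h := card_add_eq_le (fun u => ((g ^ r : ℕ) : ZMod q) * (blockVal g (2 * K) K u : ZMod q))
      (fun v => ((g ^ (r + K) : ℕ) : ZMod q) * (blockVal g K K v : ZMod q))
      ((a : ZMod q) - ((∑ i, (x.1 i : ℕ) * (g ^ (i : ℕ) + g ^ (2 * N - i)) + x.2 * g ^ N : ℕ) : ZMod q))
    simp only [(hunit _).mul_right_inj] at h
    refine le_trans (le_of_eq ?_) h
    congr 1
    ext p
    simp only [Finset.mem_filter, Finset.mem_univ, true_and, hP, Nat.cast_add, Nat.cast_mul]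
    rw [eq_sub_iff_add_eq, add_comm]
  calc _ ≤ ∑ _x : (Fin r → Fin g) × Fin g, (coll g (2 * K) K q + coll g K K q) :=
        Finset.sum_le_sum fun x _ => hone x
    _ = _ := by
      rw [Finset.sum_const, Finset.card_univ, Fintype.card_prod, Fintype.card_fun, Fintype.card_fin,
        Fintype.card_fin, smul_eq_mul, pow_succ]

/-- Collisions on average over the modulus: a diagonal pair collides for every `q`, and an
off-diagonal pair only for the divisors of a nonzero integer. -/
lemma sum_coll_le {g M K T : ℕ} (hg : 2 ≤ g) (h : K ≤ M)
    (hT : ∀ n : ℕ, n ≠ 0 → n ≤ g ^ (2 * M + 2) → n.divisors.card ≤ T) (S : Finset ℕ) :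
    ∑ q ∈ S, coll g M K q ≤ S.card * g ^ K + g ^ (2 * K) * T := by
  classical
  simp only [coll, Finset.card_filter]
  rw [Finset.sum_comm, Fintype.sum_prod_type]
  have hbound : ∀ u v : Fin K → Fin g,
      (∑ q ∈ S, if (blockVal g M K u : ZMod q) = (blockVal g M K v : ZMod q) then 1 else 0) ≤
        (if u = v then S.card else 0) + T := by
    intro u v
    rw [← Finset.card_filter]
    split_ifs with huv
    · exact (Finset.card_filter_le _ _).trans (Nat.le_add_right _ _)
    · have hne : blockVal g M K u ≠ blockVal g M K v := fun hh => huv (blockVal_injective h hh)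
      set n := ((blockVal g M K u : ℤ) - blockVal g M K v).natAbs with hn
      have hn0 : n ≠ 0 := by omega
      have hu := blockVal_le hg h u
      have hv := blockVal_le hg h v
      have hnle : n ≤ g ^ (2 * M + 2) := by omega
      rw [zero_add]
      refine le_trans (Finset.card_le_card fun q hq => ?_) (hT n hn0 hnle)
      rw [Finset.mem_filter] at hq
      rw [Nat.mem_divisors]
      refine ⟨?_, hn0⟩
      have h1 : ((blockVal g M K v : ℤ) : ZMod q) = ((blockVal g M K u : ℤ) : ZMod q) := by
        simpa using hq.2.symm
      rw [ZMod.intCast_eq_intCast_iff_dvd_sub] at h1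
      exact Int.natCast_dvd.mp h1
  calc _ ≤ ∑ u : Fin K → Fin g, ∑ v : Fin K → Fin g, ((if u = v then S.card else 0) + T) :=
        Finset.sum_le_sum fun u _ => Finset.sum_le_sum fun v _ => hbound u v
    _ = _ := by
      simp only [Finset.sum_add_distrib, Finset.sum_ite_eq, Finset.mem_univ, if_true,
        Finset.sum_const, Finset.card_univ, Fintype.card_fun, Fintype.card_fin, smul_eq_mul]
      ring

/-! ### Exponential sums -/

/-- The additive character `e(x) = exp(2πix)`. -/
noncomputable def e (x : ℝ) : ℂ := Complex.exp ((2 * Real.pi * x : ℝ) * Complex.I)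

lemma e_add (x y : ℝ) : e (x + y) = e x * e y := by
  rw [e, e, e, ← Complex.exp_add]; congr 1; push_cast; ring

lemma e_zero : e 0 = 1 := by simp [e]

lemma norm_e (x : ℝ) : ‖e x‖ = 1 := Complex.norm_exp_ofReal_mul_I _

lemma e_nat_mul (n : ℕ) (x : ℝ) : e (n * x) = e x ^ n := by
  rw [e, e, ← Complex.exp_nat_mul]; congr 1; push_cast; ring

lemma e_eq_one_iff (x : ℝ) : e x = 1 ↔ ∃ m : ℤ, x = m := by
  rw [e, Complex.exp_eq_one_iff]
  refine exists_congr fun m => ?_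
  have hpi : (2 * Real.pi : ℂ) * Complex.I ≠ 0 := Complex.two_pi_I_ne_zero
  have h1 : ((2 * Real.pi * x : ℝ) : ℂ) * Complex.I = (x : ℂ) * (2 * Real.pi * Complex.I) := by
    push_cast; ring
  rw [h1, mul_left_inj' hpi]
  exact_mod_cast Iff.rfl

lemma e_sum {ι : Type*} (s : Finset ι) (f : ι → ℝ) : e (∑ i ∈ s, f i) = ∏ i ∈ s, e (f i) := by
  classical
  induction s using Finset.induction_on with
  | empty => simp [e_zero]
  | insert i s hi ih => rw [Finset.sum_insert hi, Finset.prod_insert hi, e_add, ih]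

lemma sum_e_eq {q : ℕ} (hq : 0 < q) (m : ℤ) :
    ∑ h ∈ range q, e (h * (m / q)) = if (q : ℤ) ∣ m then (q : ℂ) else 0 := by
  have hq' : (q : ℝ) ≠ 0 := by positivity
  simp only [e_nat_mul]
  split_ifs with hd
  · obtain ⟨t, rfl⟩ := hd
    have : e (((q * t : ℤ) : ℝ) / q) = 1 := by
      rw [e_eq_one_iff]; exact ⟨t, by push_cast; field_simp⟩
    simp only [this, one_pow]; simp
  · have hne : e ((m : ℝ) / q) ≠ 1 := by
      rw [Ne, e_eq_one_iff]
      rintro ⟨t, ht⟩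
      rw [div_eq_iff hq'] at ht
      exact hd ⟨t, by rw [mul_comm]; exact_mod_cast ht⟩
    rw [geom_sum_eq hne, ← e_nat_mul]
    have : e ((q : ℝ) * (m / q)) = 1 := by
      rw [e_eq_one_iff]; exact ⟨m, by field_simp⟩
    rw [this]; simp

/-- Detecting both congruences with additive characters, the discrepancy of `S` in a residue class
modulo `q` is an average of the exponential sums of `S` at `h / q + b / R` with `h ≢ 0`. -/
lemma discrepancy_le (S : Finset ℕ) {q R : ℕ} (hq : 0 < q) (hR : 0 < R) (a k : ℤ) {B : ℝ}
    (hB : ∀ h ∈ Finset.Ico 1 q, ∀ b ∈ range R,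
      ‖∑ n ∈ S, e (((h : ℝ) / q + (b : ℝ) / R) * n)‖ ≤ B) (hB0 : 0 ≤ B) :
    |(((S.filter fun n : ℕ => (n : ℤ) % R = k % R).filter
        fun n : ℕ => (n : ℤ) % q = a % q).card : ℝ) -
      (1 / (q : ℝ)) * ((S.filter fun n : ℕ => (n : ℤ) % R = k % R).card : ℝ)| ≤ B := by
  have hq' : (q : ℝ) ≠ 0 := by positivity
  have hR' : (R : ℝ) ≠ 0 := by positivity
  have hqR : (0 : ℝ) < q * R := by positivity
  have hmod : ∀ (c : ℤ) (m n : ℕ), ((n : ℤ) % m = c % m) ↔ (m : ℤ) ∣ (n : ℤ) - c := fun c m n => by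
    rw [dvd_sub_comm]; exact Int.modEq_iff_dvd
  set X : ℝ := (((S.filter fun n : ℕ => (n : ℤ) % R = k % R).filter
        fun n : ℕ => (n : ℤ) % q = a % q).card : ℝ) with hX
  set Y : ℝ := ((S.filter fun n : ℕ => (n : ℤ) % R = k % R).card : ℝ) with hY
  have hXc : (X : ℂ) * (q * R) = ∑ n ∈ S, (∑ h ∈ range q, e (h * (((n : ℤ) - a : ℤ) / q))) *
      ∑ b ∈ range R, e (b * (((n : ℤ) - k : ℤ) / R)) := by
    simp only [sum_e_eq hq, sum_e_eq hR]
    rw [hX, Finset.filter_filter, Finset.card_filter]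
    push_cast
    rw [Finset.sum_mul]
    refine Finset.sum_congr rfl fun n _ => ?_
    simp only [hmod]
    split_ifs <;> simp_all
  have hYc : (Y : ℂ) * R = ∑ n ∈ S, ∑ b ∈ range R, e (b * (((n : ℤ) - k : ℤ) / R)) := by
    simp only [sum_e_eq hR]
    rw [hY, Finset.card_filter]
    push_cast
    rw [Finset.sum_mul]
    refine Finset.sum_congr rfl fun n _ => ?_
    simp only [hmod]
    split_ifs <;> simp
  have hsplit : ∀ f : ℕ → ℂ, ∑ h ∈ range q, f h = f 0 + ∑ h ∈ Finset.Ico 1 q, f h := fun f => by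
    rw [Finset.range_eq_Ico, Finset.sum_eq_sum_Ico_succ_bot hq]
  have hmain : ((X - 1 / q * Y : ℝ) : ℂ) * (q * R) =
      ∑ h ∈ Finset.Ico 1 q, ∑ b ∈ range R, (e (-(h * (a / q))) * e (-(b * (k / R)))) *
        ∑ n ∈ S, e (((h : ℝ) / q + (b : ℝ) / R) * n) := by
    have h1 : ((X - 1 / q * Y : ℝ) : ℂ) * (q * R) = (X : ℂ) * (q * R) - (Y : ℂ) * R := by
      have : (q : ℂ) ≠ 0 := by exact_mod_cast hq'
      push_cast; field_simp
    rw [h1, hXc, hYc, ← Finset.sum_sub_distrib]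
    simp only [Finset.mul_sum]
    have h2 : ∀ n ∈ S, (∑ h ∈ range q, e (h * (((n : ℤ) - a : ℤ) / q))) *
        ∑ b ∈ range R, e (b * (((n : ℤ) - k : ℤ) / R)) -
          ∑ b ∈ range R, e (b * (((n : ℤ) - k : ℤ) / R)) =
        ∑ h ∈ Finset.Ico 1 q, ∑ b ∈ range R, (e (-(h * (a / q))) * e (-(b * (k / R)))) *
          e (((h : ℝ) / q + (b : ℝ) / R) * n) := by
      intro n _
      rw [hsplit]
      simp only [Nat.cast_zero, zero_mul, e_zero]
      rw [add_mul, one_mul, add_sub_cancel_left, Finset.sum_mul_sum]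
      refine Finset.sum_congr rfl fun h _ => Finset.sum_congr rfl fun b _ => ?_
      simp only [← e_add]
      congr 1
      push_cast
      field_simp
      ring
    simp only [Finset.mul_sum] at h2
    rw [Finset.sum_congr rfl h2, Finset.sum_comm]
    refine Finset.sum_congr rfl fun h _ => ?_
    rw [Finset.sum_comm]
  have hnorm : |X - 1 / q * Y| * (q * R) ≤ B * (q * R) := by
    have h1 : |X - 1 / q * Y| * (q * R) = ‖((X - 1 / q * Y : ℝ) : ℂ) * (q * R)‖ := by
      rw [norm_mul, Complex.norm_real, norm_mul, Complex.norm_natCast, Complex.norm_natCast,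
        Real.norm_eq_abs]
    rw [h1, hmain]
    calc _ ≤ ∑ h ∈ Finset.Ico 1 q, ∑ b ∈ range R, B := by
          refine norm_sum_le_of_le _ fun h hh => norm_sum_le_of_le _ fun b hb => ?_
          rw [norm_mul, norm_mul, norm_e, norm_e, one_mul, one_mul]
          exact hB h hh b hb
      _ = ((q - 1 : ℕ) : ℝ) * (R * B) := by simp
      _ ≤ q * (R * B) := by
          gcongr
          exact Nat.sub_le _ _
      _ = _ := by ring
  exact le_of_mul_le_mul_right hnorm hqR

/-- The exponential sum over palindromes factors over the free digits. -/
lemma sum_Palins_e {g : ℕ} (N : ℕ) (hg : 2 ≤ g) (θ : ℝ) :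
    ∑ n ∈ Palins g (2 * N + 1), e (θ * n) =
      ∏ i ∈ range (N + 1), ∑ x ∈ digSet g i, e (x * (θ * wt g N i)) := by
  rw [Palins_eq_image N hg, Finset.sum_image (palVal_injOn N), Finset.prod_range,
    Finset.prod_univ_sum (fun i : Fin (N + 1) => digSet g i)
      (fun i x => e (x * (θ * wt g N i)))]
  refine Finset.sum_congr rfl fun x _ => ?_
  rw [← e_sum, palVal]
  congr 1
  push_cast
  rw [Finset.mul_sum]
  exact Finset.sum_congr rfl fun i _ => by ring

/-- The distance from a real number to the nearest integer. -/
noncomputable def dist1 (t : ℝ) : ℝ := |t - round t|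

lemma dist1_le (t : ℝ) (z : ℤ) : dist1 t ≤ |t - z| := round_le t z

lemma dist1_le_half (t : ℝ) : dist1 t ≤ 1 / 2 := abs_sub_round t

lemma dist1_add_int (t : ℝ) (z : ℤ) : dist1 (t + z) = dist1 t := by
  rw [dist1, dist1, round_add_intCast]; push_cast; congr 1; ring

lemma exists_digit_sum_saving {g : ℕ} (hg : 2 ≤ g) {δ : ℝ} (hδ : 0 < δ) (hδ' : δ ≤ 1 / 2) :
    ∃ ρ : ℝ, 0 < ρ ∧ ρ < 1 ∧ ∀ β : ℝ, δ ≤ dist1 β →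
      ‖∑ x ∈ range g, e (x * β)‖ ≤ g * ρ := by
  have hpi := Real.pi_pos
  set c := Real.cos (2 * Real.pi * δ) with hc
  have hc1 : c < 1 := by
    have := Real.cos_lt_cos_of_nonneg_of_le_pi (x := 0) (y := 2 * Real.pi * δ) le_rfl
      (by nlinarith) (by positivity)
    simpa using this
  set s := Real.sqrt (2 + 2 * c) with hs
  have hs2 : s < 2 := by
    rw [hs, Real.sqrt_lt' (by norm_num)]; linarith
  have hs0 : 0 ≤ s := Real.sqrt_nonneg _
  have hg' : (2 : ℝ) ≤ g := by exact_mod_cast hg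
  refine ⟨max (1 / 2) ((s + (g - 2)) / g), by positivity, ?_, fun β hβ => ?_⟩
  · refine max_lt (by norm_num) ?_
    rw [div_lt_one (by linarith)]; linarith
  have h1 : ‖1 + e β‖ ≤ s := by
    rw [hs]
    refine Real.le_sqrt_of_sq_le ?_
    have hcos : Real.cos (2 * Real.pi * β) ≤ c := by
      have h2 : Real.cos (2 * Real.pi * β) = Real.cos (2 * Real.pi * dist1 β) := by
        have h3 : 2 * Real.pi * dist1 β = |2 * Real.pi * β - (round β : ℤ) * (2 * Real.pi)| := by
          rw [dist1, show 2 * Real.pi * β - (round β : ℤ) * (2 * Real.pi) =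
            (2 * Real.pi) * (β - round β) by ring, abs_mul, abs_of_pos (by positivity : 0 < 2 * Real.pi)]
        rw [h3, Real.cos_abs, Real.cos_sub_int_mul_two_pi]
      rw [h2, hc]
      have := dist1_le_half β
      exact Real.cos_le_cos_of_nonneg_of_le_pi (by positivity) (by nlinarith) (by gcongr)
    have h4 : ‖1 + e β‖ ^ 2 = 2 + 2 * Real.cos (2 * Real.pi * β) := by
      rw [← Complex.normSq_eq_norm_sq, e, Complex.exp_mul_I, ← Complex.ofReal_cos,
        ← Complex.ofReal_sin, Complex.normSq_apply]
      simp only [Complex.add_re, Complex.add_im, Complex.one_re, Complex.one_im, Complex.mul_re,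
        Complex.mul_im, Complex.ofReal_re, Complex.ofReal_im, Complex.I_re, Complex.I_im]
      nlinarith [Real.sin_sq_add_cos_sq (2 * Real.pi * β)]
    rw [h4]; linarith
  have h5 : ∑ x ∈ range g, e (x * β) = (1 + e β) + ∑ x ∈ Finset.Ico 2 g, e (x * β) := by
    rw [Finset.range_eq_Ico, ← Finset.sum_Ico_consecutive _ (Nat.zero_le 2) hg,
      ← Finset.range_eq_Ico]
    simp [Finset.sum_range_succ, e_zero]
  have h6 : ‖∑ x ∈ Finset.Ico 2 g, e (x * β)‖ ≤ g - 2 := by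
    calc _ ≤ ∑ x ∈ Finset.Ico 2 g, (1 : ℝ) := norm_sum_le_of_le _ fun x _ => (norm_e _).le
      _ = g - 2 := by simp [Nat.cast_sub hg]
  calc _ ≤ s + (g - 2) := by rw [h5]; exact (norm_add_le _ _).trans (add_le_add h1 h6)
    _ = g * ((s + (g - 2)) / g) := by field_simp
    _ ≤ _ := by gcongr; exact le_max_right _ _

lemma mul_dist1_le {g : ℕ} {t : ℝ} (h : g * dist1 t < 1 / 2) : g * dist1 t ≤ dist1 (g * t) := by
  have h1 : |(g : ℝ) * t - (g * round t : ℤ)| = g * dist1 t := by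
    rw [dist1]; push_cast
    rw [← mul_sub, abs_mul, Nat.abs_cast]
  by_cases hz : round ((g : ℝ) * t) = g * round t
  · rw [dist1, dist1, hz]; push_cast
    rw [← mul_sub, abs_mul, Nat.abs_cast]
  · have h2 : (1 : ℝ) ≤ |((round ((g : ℝ) * t) - g * round t : ℤ) : ℝ)| := by
      rw [← Int.cast_abs]
      exact_mod_cast Int.one_le_abs (sub_ne_zero.mpr hz)
    have h3 : |((round ((g : ℝ) * t) - g * round t : ℤ) : ℝ)| ≤
        |(g : ℝ) * t - (g * round t : ℤ)| + |(g : ℝ) * t - round ((g : ℝ) * t)| := by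
      rw [show ((round ((g : ℝ) * t) - g * round t : ℤ) : ℝ) =
        ((g : ℝ) * t - (g * round t : ℤ)) - ((g : ℝ) * t - round ((g : ℝ) * t)) by push_cast; ring]
      exact abs_sub _ _
    rw [h1] at h3
    change g * dist1 t ≤ |(g : ℝ) * t - round ((g : ℝ) * t)|
    linarith

/-- Multiplication by `g` expands the distance to the nearest integer as long as that distance
is small, so one of the first `L` iterates of `t` is far from the integers. -/
lemma exists_far {g L : ℕ} (hg : 2 ≤ g) {t : ℝ} (ht : 1 ≤ g ^ L * dist1 t) :
    ∃ j < L, 1 / (2 * g) ≤ dist1 (g ^ j * t) := by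
  by_contra! hcon
  have hg0 : (0 : ℝ) < g := by positivity
  have hind : ∀ j ≤ L, g ^ j * dist1 t ≤ dist1 (g ^ j * t) := by
    intro j
    induction j with
    | zero => simp
    | succ j ih =>
      intro hj
      have h1 := ih (by omega)
      have h2 := hcon j (by omega)
      have h3 : g * dist1 (g ^ j * t) < 1 / 2 := by
        calc _ < (g : ℝ) * (1 / (2 * g)) := by gcongr
          _ = 1 / 2 := by field_simp
      have h4 := mul_dist1_le h3
      rw [← mul_assoc, ← pow_succ'] at h4
      calc (g : ℝ) ^ (j + 1) * dist1 t = g * (g ^ j * dist1 t) := by ring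
        _ ≤ g * dist1 (g ^ j * t) := by gcongr
        _ ≤ _ := h4
  have := hind L le_rfl
  have h5 := dist1_le_half (g ^ L * t)
  linarith

lemma prod_window_le {f : ℕ → ℝ} {ρ : ℝ} {W B : ℕ} (h0 : ∀ i, 0 ≤ f i) (h1 : ∀ i, f i ≤ 1)
    (hw : ∀ s < B, ∃ i ∈ Finset.Ico (1 + s * W) (1 + (s + 1) * W), f i ≤ ρ) :
    ∏ i ∈ range (1 + B * W), f i ≤ ρ ^ B := by
  induction B with
  | zero => simpa using h1 0
  | succ B ih =>
    have ih' := ih fun s hs => hw s (by omega)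
    obtain ⟨i, hi, hfi⟩ := hw B (by omega)
    have hle : 1 + B * W ≤ 1 + (B + 1) * W := by nlinarith
    rw [← Finset.prod_range_mul_prod_Ico _ hle, pow_succ]
    have h3 : ∏ j ∈ Finset.Ico (1 + B * W) (1 + (B + 1) * W), f j ≤ ρ := by
      rw [← Finset.mul_prod_erase _ _ hi]
      calc _ ≤ f i * 1 := by
            gcongr
            · exact h0 i
            · exact Finset.prod_le_one (fun j _ => h0 j) fun j _ => h1 j
        _ ≤ ρ := by linarith
    exact mul_le_mul ih' h3 (Finset.prod_nonneg fun j _ => h0 j)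
      ((Finset.prod_nonneg fun j _ => h0 j).trans ih')

lemma norm_digit_sum_le (g i : ℕ) (β : ℝ) : ‖∑ x ∈ digSet g i, e (x * β)‖ ≤ g := by
  calc _ ≤ ∑ x ∈ digSet g i, (1 : ℝ) := norm_sum_le_of_le _ fun x _ => (norm_e _).le
    _ = ((digSet g i).card : ℝ) := by simp
    _ ≤ g := by
      have : (digSet g i).card ≤ g := by unfold digSet; split_ifs <;> simp
      exact_mod_cast this

/-- With `x i = θ (g ^ i + g ^ (2N - i))`, the combination `g * x i - x (i + 1)` equals
`θ (g³ - g) g ^ (2N - i - 2)`, in which the part `b / (g³ - g)` of `θ` becomes an integer. By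
`exists_far`, every window of `J + 1` consecutive digits therefore contains one whose digit sum
is smaller than `g` by a constant factor. -/
lemma exists_window_far {g N J m q h b : ℕ} (hg : 2 ≤ g) (hq : Nat.Coprime q (g ^ 3 - g))
    (hqJ : q ≤ g ^ J) (h0 : 0 < h) (hhq : h < q) (hJm : J ≤ m) (hmN : m < N) :
    ∃ i, m - J ≤ i ∧ i ≤ m ∧
      1 / (2 * (g : ℝ) * (g + 1)) ≤
        dist1 (((h : ℝ) / q + (b : ℝ) / ((g ^ 3 - g : ℕ) : ℝ)) * wt g N i) := by
  have hg0 : (0 : ℝ) < g := by positivity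
  have hq0 : (0 : ℝ) < q := by exact_mod_cast (by omega : 0 < q)
  have hgle : g < g ^ 3 := by
    calc g = g ^ 1 := (pow_one g).symm
      _ < g ^ 3 := Nat.pow_lt_pow_right (by omega) (by norm_num)
  set R := g ^ 3 - g with hR
  have hR0 : 0 < R := by omega
  have hRr : (R : ℝ) = (g : ℝ) ^ 3 - g := by rw [hR, Nat.cast_sub hgle.le]; push_cast; ring
  have hR0' : (0 : ℝ) < R := by exact_mod_cast hR0
  have hgR : g ∣ R := Nat.dvd_sub (dvd_pow_self g (by norm_num)) dvd_rfl
  have hqg : Nat.Coprime q g := Nat.Coprime.coprime_dvd_right hgR hq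
  set θ : ℝ := (h : ℝ) / q + (b : ℝ) / R with hθ
  set e0 := 2 * N - m - 1 with he0
  set t : ℝ := (h : ℝ) * R * g ^ e0 / q with ht
  have hnd : ¬ q ∣ h * R * g ^ e0 := by
    intro hd
    have h1 := (Nat.Coprime.dvd_of_dvd_mul_right (hqg.pow_right e0) hd)
    have h2 := Nat.Coprime.dvd_of_dvd_mul_right hq h1
    exact absurd (Nat.le_of_dvd h0 h2) (by omega)
  have htd : 1 / (q : ℝ) ≤ dist1 t := by
    rw [dist1]
    have h1 : t - round t = (((h * R * g ^ e0 : ℕ) : ℤ) - round t * q : ℤ) / (q : ℝ) := by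
      rw [ht]; push_cast; field_simp
    rw [h1, abs_div, abs_of_pos hq0]
    gcongr
    rw [← Int.cast_abs]
    have : ((h * R * g ^ e0 : ℕ) : ℤ) - round t * q ≠ 0 := by
      intro h2
      apply hnd
      have h3 : (q : ℤ) ∣ ((h * R * g ^ e0 : ℕ) : ℤ) :=
        ⟨round t, by rw [mul_comm (q : ℤ)]; exact sub_eq_zero.mp h2⟩
      exact_mod_cast h3
    exact_mod_cast Int.one_le_abs this
  have hone : 1 ≤ (g : ℝ) ^ J * dist1 t := by
    calc (1 : ℝ) = q * (1 / q) := by field_simp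
      _ ≤ (g : ℝ) ^ J * dist1 t := by
        gcongr
        exact_mod_cast hqJ
  obtain ⟨j, hj, hfar⟩ := exists_far hg hone
  set i := m - 1 - j with hi
  have hcomb : (g : ℝ) * (θ * wt g N i) - θ * wt g N (i + 1) =
      g ^ j * t + ((b * g ^ (e0 + j) : ℕ) : ℤ) := by
    rw [wt, wt, if_pos (by omega), if_pos (by omega)]
    have h1 : 2 * N - i = (e0 + j) + 2 := by omega
    have h2 : 2 * N - (i + 1) = (e0 + j) + 1 := by omega
    have h3 : θ * R = h * R / q + b := by rw [hθ]; field_simp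
    rw [h1, h2, ht]
    push_cast
    calc _ = θ * ((g : ℝ) ^ 3 - g) * g ^ (e0 + j) := by ring
      _ = _ := by rw [← hRr, h3]; ring
  have hfar' : 1 / (2 * (g : ℝ)) ≤ dist1 ((g : ℝ) * (θ * wt g N i) - θ * wt g N (i + 1)) := by
    rw [hcomb, dist1_add_int]; exact hfar
  by_contra! hcon
  have hc1 := hcon i (by omega) (by omega)
  have hc2 := hcon (i + 1) (by omega) (by omega)
  have hle := dist1_le ((g : ℝ) * (θ * wt g N i) - θ * wt g N (i + 1))
    (g * round (θ * wt g N i) - round (θ * wt g N (i + 1)))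
  have hle2 : |(g : ℝ) * (θ * wt g N i) - θ * wt g N (i + 1) -
      ((g * round (θ * wt g N i) - round (θ * wt g N (i + 1)) : ℤ) : ℝ)| ≤
      g * dist1 (θ * wt g N i) + dist1 (θ * wt g N (i + 1)) := by
    have h1 : (g : ℝ) * (θ * wt g N i) - θ * wt g N (i + 1) -
      ((g * round (θ * wt g N i) - round (θ * wt g N (i + 1)) : ℤ) : ℝ) =
      g * (θ * wt g N i - round (θ * wt g N i)) -
        (θ * wt g N (i + 1) - round (θ * wt g N (i + 1))) := by push_cast; ring
    rw [h1]
    refine (abs_sub _ _).trans ?_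
    rw [abs_mul, Nat.abs_cast, dist1, dist1]
  have hlt : g * dist1 (θ * wt g N i) + dist1 (θ * wt g N (i + 1)) <
      g * (1 / (2 * (g : ℝ) * (g + 1))) + 1 / (2 * (g : ℝ) * (g + 1)) := by
    have := mul_lt_mul_of_pos_left hc1 hg0
    linarith
  have heq : g * (1 / (2 * (g : ℝ) * (g + 1))) + 1 / (2 * (g : ℝ) * (g + 1)) = 1 / (2 * g) := by
    field_simp
  linarith

/-- Pointwise bound for the exponential sum at fractions with small denominator. -/
lemma exists_exp_sum_le {g : ℕ} (hg : 2 ≤ g) :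
    ∃ ρ : ℝ, 0 < ρ ∧ ρ < 1 ∧ ∀ N J B q h b : ℕ, Nat.Coprime q (g ^ 3 - g) → q ≤ g ^ J →
      0 < h → h < q → 1 + B * (J + 1) ≤ N →
      ‖∑ n ∈ Palins g (2 * N + 1), e (((h : ℝ) / q + (b : ℝ) / ((g ^ 3 - g : ℕ) : ℝ)) * n)‖ ≤
        (g : ℝ) ^ (N + 1) * ρ ^ B := by
  have hg0 : (0 : ℝ) < g := by positivity
  have hg2 : (2 : ℝ) ≤ g := by exact_mod_cast hg
  obtain ⟨ρ, hρ0, hρ1, hρ⟩ := exists_digit_sum_saving hg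
    (δ := 1 / (2 * (g : ℝ) * (g + 1))) (by positivity) (by
      rw [div_le_div_iff₀ (by positivity) (by norm_num)]; nlinarith)
  refine ⟨ρ, hρ0, hρ1, fun N J B q h b hq hqJ h0 hhq hN => ?_⟩
  set θ : ℝ := (h : ℝ) / q + (b : ℝ) / ((g ^ 3 - g : ℕ) : ℝ) with hθ
  set f : ℕ → ℝ := fun i => ‖∑ x ∈ digSet g i, e (x * (θ * wt g N i))‖ / g with hf
  have hf0 : ∀ i, 0 ≤ f i := fun i => by positivity
  have hf1 : ∀ i, f i ≤ 1 := fun i => by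
    rw [hf, div_le_one hg0]; exact norm_digit_sum_le g i _
  have hprod : ‖∑ n ∈ Palins g (2 * N + 1), e (θ * n)‖ =
      (g : ℝ) ^ (N + 1) * ∏ i ∈ range (N + 1), f i := by
    rw [sum_Palins_e N hg, norm_prod, hf, Finset.prod_div_distrib, Finset.prod_const,
      Finset.card_range, mul_div_cancel₀ _ (by positivity)]
  rw [hprod]
  gcongr
  have hw : ∏ i ∈ range (1 + B * (J + 1)), f i ≤ ρ ^ B := by
    refine prod_window_le hf0 hf1 fun s hs => ?_
    have hsB : (s + 1) * (J + 1) ≤ B * (J + 1) := Nat.mul_le_mul_right _ hs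
    have hexp : (s + 1) * (J + 1) = s * (J + 1) + (J + 1) := by ring
    obtain ⟨i, hi1, hi2, hi⟩ := exists_window_far (N := N) (m := 1 + s * (J + 1) + J) (b := b) hg hq
      hqJ h0 hhq (by omega) (by omega)
    refine ⟨i, Finset.mem_Ico.mpr ⟨by omega, by omega⟩, ?_⟩
    have h2 := hρ _ hi
    have h3 : digSet g i = range g := if_neg (by omega)
    rw [hf, div_le_iff₀ hg0, h3, mul_comm ρ]
    exact h2
  refine le_trans ?_ hw
  rw [← Finset.prod_range_mul_prod_Ico f (show 1 + B * (J + 1) ≤ N + 1 by omega)]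
  exact mul_le_of_le_one_right (Finset.prod_nonneg fun j _ => hf0 j)
    (Finset.prod_le_one (fun j _ => hf0 j) fun j _ => hf1 j)

/-! ### Small and large moduli -/

/-- Moduli in `[g ^ j, g ^ (j + 1))`. With `K = ⌊5j/8⌋`, the two innermost blocks of `K` digits fit
into a half-palindrome because `5j ≤ 4N`; the diagonal collisions contribute
`g ^ (N + j / 2 - K)` and the off-diagonal ones `g ^ (N - j / 2)` times a divisor bound. -/
lemma exists_block_le {g : ℕ} (hg : 2 ≤ g) :
    ∃ C : ℝ, 0 < C ∧ ∀ N j : ℕ, 5 * j ≤ 4 * N → ∀ S : Finset ℕ,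
      (∀ q ∈ S, Nat.gcd q (g ^ 3 - g) = 1 ∧ g ^ j ≤ q ∧ q < g ^ (j + 1)) → ∀ a k : ℕ → ℤ,
        ∑ q ∈ S, (q : ℝ) ^ (-(1 / 2 : ℝ)) *
          |((PalinsKgMod g (2 * N + 1) (k q) (a q) q).card : ℝ) -
            (1 / (q : ℝ)) * ((PalinsKg g (2 * N + 1) (k q)).card : ℝ)| ≤
        C * (g : ℝ) ^ (N : ℝ) * ((g : ℝ) ^ (-(1 / 8) : ℝ)) ^ j := by
  obtain ⟨C₀, hC₀, hdiv⟩ := exists_card_divisors_le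
  have hG0 : (0 : ℝ) < g := by positivity
  have hG1 : (1 : ℝ) ≤ g := by exact_mod_cast (by omega : 1 ≤ g)
  set G : ℝ := (g : ℝ) with hG
  refine ⟨2 * G * (G ^ 2 + C₀ * G) + G ^ 2, by positivity, fun N j hj S hS a k => ?_⟩
  set K := 5 * j / 8 with hK
  obtain ⟨r, hr⟩ : ∃ r, N = r + K + K := ⟨N - K - K, by omega⟩
  set T := ⌊C₀ * ((g ^ (4 * K + 2) : ℕ) : ℝ) ^ (1 / 20 : ℝ)⌋₊ with hT
  have hTle : (T : ℝ) ≤ C₀ * G ^ ((j : ℝ) / 8 + 1) := by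
    refine (Nat.floor_le (by positivity)).trans ?_
    gcongr
    push_cast
    rw [← Real.rpow_natCast, ← Real.rpow_mul hG0.le]
    refine Real.rpow_le_rpow_of_exponent_le hG1 ?_
    have : (8 * K : ℝ) ≤ 5 * j := by exact_mod_cast (by omega : 8 * K ≤ 5 * j)
    push_cast
    linarith
  have hTdiv : ∀ n : ℕ, n ≠ 0 → n ≤ g ^ (4 * K + 2) → n.divisors.card ≤ T := by
    intro n hn hle
    refine Nat.le_floor ((hdiv n hn).trans ?_)
    gcongr
  have hScard : S.card ≤ g ^ (j + 1) := by
    calc S.card ≤ (range (g ^ (j + 1))).card :=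
          Finset.card_le_card fun q hq => Finset.mem_range.mpr (hS q hq).2.2
      _ = _ := Finset.card_range _
  set cnt : ℕ → ℕ := fun q =>
    ((Palins g (2 * N + 1)).filter fun n : ℕ => (n : ℤ) % (q : ℤ) = a q % (q : ℤ)).card with hcnt
  have hgR : g ∣ g ^ 3 - g := Nat.dvd_sub (dvd_pow_self g (by norm_num)) dvd_rfl
  have hcount : ∑ q ∈ S, cnt q ≤ g ^ (r + 1) * (2 * (g ^ (j + 1) * g ^ K + g ^ (2 * K) * T)) := by
    calc ∑ q ∈ S, cnt q
        ≤ ∑ q ∈ S, g ^ (r + 1) * (coll g (2 * K) K q + coll g K K q) := by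
          refine Finset.sum_le_sum fun q hq => ?_
          obtain ⟨h1, h2, _⟩ := hS q hq
          refine card_residue_le hg hr ?_ (Nat.Coprime.coprime_dvd_right hgR h1) (a q)
          have : 0 < g ^ j := by positivity
          omega
      _ = g ^ (r + 1) * (∑ q ∈ S, coll g (2 * K) K q + ∑ q ∈ S, coll g K K q) := by
          rw [← Finset.mul_sum, Finset.sum_add_distrib]
      _ ≤ _ := by
          have h1 := sum_coll_le (K := K) (M := 2 * K) (T := T) hg (by omega)
            (fun n hn hle => hTdiv n hn (hle.trans (Nat.pow_le_pow_right (by omega) (by omega)))) S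
          have h2 := sum_coll_le (K := K) (M := K) (T := T) hg le_rfl
            (fun n hn hle => hTdiv n hn (hle.trans (Nat.pow_le_pow_right (by omega) (by omega)))) S
          have h3 : S.card * g ^ K ≤ g ^ (j + 1) * g ^ K := Nat.mul_le_mul_right _ hScard
          exact Nat.mul_le_mul_left _ (by omega)
  have hterm : ∀ q ∈ S, (q : ℝ) ^ (-(1 / 2 : ℝ)) *
          |((PalinsKgMod g (2 * N + 1) (k q) (a q) q).card : ℝ) -
            (1 / (q : ℝ)) * ((PalinsKg g (2 * N + 1) (k q)).card : ℝ)| ≤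
        G ^ (-(j : ℝ) / 2) * (cnt q + G ^ (N + 1) / G ^ j) := by
    intro q hq
    obtain ⟨_, h2, _⟩ := hS q hq
    have hgj : (0 : ℝ) < G ^ j := by positivity
    have hqj : G ^ j ≤ (q : ℝ) := by rw [hG]; exact_mod_cast h2
    have h3 : (q : ℝ) ^ (-(1 / 2 : ℝ)) ≤ G ^ (-(j : ℝ) / 2) := by
      have h4 : G ^ (-(j : ℝ) / 2) = (G ^ j) ^ (-(1 / 2 : ℝ)) := by
        rw [← Real.rpow_natCast, ← Real.rpow_mul hG0.le]; congr 1; ring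
      rw [h4]
      exact Real.rpow_le_rpow_of_nonpos hgj hqj (by norm_num)
    have h5 : ((PalinsKgMod g (2 * N + 1) (k q) (a q) q).card : ℝ) ≤ cnt q := by
      have : (PalinsKgMod g (2 * N + 1) (k q) (a q) q).card ≤ cnt q :=
        Finset.card_le_card (Finset.filter_subset_filter _ (Finset.filter_subset _ _))
      exact_mod_cast this
    have h6 : ((PalinsKg g (2 * N + 1) (k q)).card : ℝ) ≤ G ^ (N + 1) := by
      have : (PalinsKg g (2 * N + 1) (k q)).card ≤ g ^ (N + 1) :=
        (Finset.card_le_card (Finset.filter_subset _ _)).trans (card_Palins_le N hg)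
      rw [hG]; exact_mod_cast this
    have h7 : (1 / (q : ℝ)) * ((PalinsKg g (2 * N + 1) (k q)).card : ℝ) ≤ G ^ (N + 1) / G ^ j := by
      rw [one_div_mul_eq_div]; gcongr
    gcongr
    refine (abs_sub _ _).trans ?_
    rw [Nat.abs_cast, abs_of_nonneg (by positivity)]
    exact add_le_add h5 h7
  have hKr : (5 * j : ℝ) - 8 ≤ 8 * K := by
    have : 5 * j ≤ 8 * K + 8 := by omega
    have : (5 * j : ℝ) ≤ 8 * K + 8 := by exact_mod_cast this
    linarith
  have hcountR : (∑ q ∈ S, (cnt q : ℝ)) ≤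
      2 * (G ^ ((N : ℝ) + 2 + j - K) + G ^ ((N : ℝ) + 1) * T) := by
    have h1 : (∑ q ∈ S, (cnt q : ℝ)) ≤
        G ^ (r + 1) * (2 * (G ^ (j + 1) * G ^ K + G ^ (2 * K) * T)) := by
      rw [hG]; exact_mod_cast hcount
    refine h1.trans (le_of_eq ?_)
    have e1 : G ^ ((N : ℝ) + 2 + j - K) = G ^ (r + 1) * (G ^ (j + 1) * G ^ K) := by
      simp only [← Real.rpow_natCast, ← Real.rpow_add hG0]
      congr 1; rw [hr]; push_cast; ring
    have e2 : G ^ ((N : ℝ) + 1) = G ^ (r + 1) * G ^ (2 * K) := by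
      simp only [← Real.rpow_natCast, ← Real.rpow_add hG0]
      congr 1; rw [hr]; push_cast; ring
    rw [e1, e2]; ring
  have hx : ((G : ℝ) ^ (-(1 / 8) : ℝ)) ^ j = G ^ (-(j : ℝ) / 8) := by
    rw [← Real.rpow_natCast, ← Real.rpow_mul hG0.le]; congr 1; ring
  have hj0 : (0 : ℝ) ≤ j := by positivity
  -- the three contributions, each compared with `G ^ (N - j / 8)`
  have c1 : G ^ (-(j : ℝ) / 2) * G ^ ((N : ℝ) + 2 + j - K) ≤
      G ^ 3 * (G ^ (N : ℝ) * G ^ (-(j : ℝ) / 8)) := by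
    rw [← Real.rpow_natCast, ← Real.rpow_add hG0, ← Real.rpow_add hG0, ← Real.rpow_add hG0]
    refine Real.rpow_le_rpow_of_exponent_le hG1 ?_
    push_cast; linarith
  have c2 : G ^ (-(j : ℝ) / 2) * (G ^ ((N : ℝ) + 1) * T) ≤
      C₀ * G ^ 2 * (G ^ (N : ℝ) * G ^ (-(j : ℝ) / 8)) := by
    calc _ ≤ G ^ (-(j : ℝ) / 2) * (G ^ ((N : ℝ) + 1) * (C₀ * G ^ ((j : ℝ) / 8 + 1))) := by gcongr
      _ = C₀ * (G ^ (-(j : ℝ) / 2) * G ^ ((N : ℝ) + 1) * G ^ ((j : ℝ) / 8 + 1)) := by ring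
      _ ≤ C₀ * (G ^ 2 * (G ^ (N : ℝ) * G ^ (-(j : ℝ) / 8))) := by
        refine mul_le_mul_of_nonneg_left ?_ hC₀.le
        simp only [← Real.rpow_natCast, ← Real.rpow_add hG0]
        refine Real.rpow_le_rpow_of_exponent_le hG1 ?_
        push_cast; linarith
      _ = _ := by ring
  have c3 : G ^ (-(j : ℝ) / 2) * (S.card * (G ^ (N + 1) / G ^ j)) ≤
      G ^ 2 * (G ^ (N : ℝ) * G ^ (-(j : ℝ) / 8)) := by
    have h1 : (S.card : ℝ) ≤ G ^ (j + 1) := by rw [hG]; exact_mod_cast hScard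
    calc _ ≤ G ^ (-(j : ℝ) / 2) * (G ^ (j + 1) * (G ^ (N + 1) / G ^ j)) := by gcongr
      _ = G ^ (-(j : ℝ) / 2) * G ^ (N + 2) := by
        congr 1; field_simp; ring
      _ ≤ _ := by
        simp only [← Real.rpow_natCast, ← Real.rpow_add hG0]
        refine Real.rpow_le_rpow_of_exponent_le hG1 ?_
        push_cast; linarith
  refine (Finset.sum_le_sum hterm).trans ?_
  rw [← Finset.mul_sum, Finset.sum_add_distrib, Finset.sum_const, nsmul_eq_mul, hx]
  calc _ ≤ G ^ (-(j : ℝ) / 2) * (2 * (G ^ ((N : ℝ) + 2 + j - K) + G ^ ((N : ℝ) + 1) * T) +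
          S.card * (G ^ (N + 1) / G ^ j)) := by gcongr
    _ = 2 * (G ^ (-(j : ℝ) / 2) * G ^ ((N : ℝ) + 2 + j - K)) +
          2 * (G ^ (-(j : ℝ) / 2) * (G ^ ((N : ℝ) + 1) * T)) +
          G ^ (-(j : ℝ) / 2) * (S.card * (G ^ (N + 1) / G ^ j)) := by ring
    _ ≤ 2 * (G ^ 3 * (G ^ (N : ℝ) * G ^ (-(j : ℝ) / 8))) +
          2 * (C₀ * G ^ 2 * (G ^ (N : ℝ) * G ^ (-(j : ℝ) / 8))) +
          G ^ 2 * (G ^ (N : ℝ) * G ^ (-(j : ℝ) / 8)) := by gcongr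
    _ = _ := by ring

/-- Moduli below `g ^ J`, each estimated by the pointwise bound. -/
lemma exists_small_le {g : ℕ} (hg : 2 ≤ g) :
    ∃ ρ : ℝ, 0 < ρ ∧ ρ < 1 ∧ ∀ N J : ℕ, 0 < N → ∀ S : Finset ℕ,
      (∀ q ∈ S, Nat.gcd q (g ^ 3 - g) = 1 ∧ 1 ≤ q ∧ q < g ^ J) → ∀ a k : ℕ → ℤ,
        ∑ q ∈ S, (q : ℝ) ^ (-(1 / 2 : ℝ)) *
          |((PalinsKgMod g (2 * N + 1) (k q) (a q) q).card : ℝ) -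
            (1 / (q : ℝ)) * ((PalinsKg g (2 * N + 1) (k q)).card : ℝ)| ≤
        (g : ℝ) ^ J * ((g : ℝ) ^ (N + 1) * ρ ^ ((N - 1) / (J + 1))) := by
  obtain ⟨ρ, hρ0, hρ1, hρ⟩ := exists_exp_sum_le hg
  refine ⟨ρ, hρ0, hρ1, fun N J hN S hS a k => ?_⟩
  set B := (N - 1) / (J + 1) with hB
  have hgle : g < g ^ 3 := by
    calc g = g ^ 1 := (pow_one g).symm
      _ < g ^ 3 := Nat.pow_lt_pow_right (by omega) (by norm_num)
  have hRz : ((g ^ 3 - g : ℕ) : ℤ) = (g : ℤ) ^ 3 - g := by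
    rw [Nat.cast_sub hgle.le]; push_cast; ring
  have hBN : 1 + B * (J + 1) ≤ N := by
    have := Nat.div_mul_le_self (N - 1) (J + 1)
    rw [← hB] at this
    omega
  have hterm : ∀ q ∈ S, (q : ℝ) ^ (-(1 / 2 : ℝ)) *
          |((PalinsKgMod g (2 * N + 1) (k q) (a q) q).card : ℝ) -
            (1 / (q : ℝ)) * ((PalinsKg g (2 * N + 1) (k q)).card : ℝ)| ≤
        (g : ℝ) ^ (N + 1) * ρ ^ B := by
    intro q hq
    obtain ⟨h1, h2, h3⟩ := hS q hq
    have h4 : (q : ℝ) ^ (-(1 / 2 : ℝ)) ≤ 1 :=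
      Real.rpow_le_one_of_one_le_of_nonpos (by exact_mod_cast h2) (by norm_num)
    have h5 := discrepancy_le (Palins g (2 * N + 1)) (q := q) (R := g ^ 3 - g) h2 (by omega) (a q)
      (k q) (B := (g : ℝ) ^ (N + 1) * ρ ^ B) (fun h hh b _ => by
        rw [Finset.mem_Ico] at hh
        exact hρ N J B q h b h1 h3.le hh.1 hh.2 hBN) (by positivity)
    rw [hRz] at h5
    calc _ ≤ 1 * ((g : ℝ) ^ (N + 1) * ρ ^ B) := by
          refine mul_le_mul h4 h5 (abs_nonneg _) zero_le_one
      _ = _ := one_mul _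
  have hScard : (S.card : ℝ) ≤ (g : ℝ) ^ J := by
    have : S.card ≤ g ^ J := by
      calc S.card ≤ (range (g ^ J)).card :=
            Finset.card_le_card fun q hq => Finset.mem_range.mpr (hS q hq).2.2
        _ = _ := Finset.card_range _
    exact_mod_cast this
  refine (Finset.sum_le_sum hterm).trans ?_
  rw [Finset.sum_const, nsmul_eq_mul]
  gcongr

end PalinBV

open PalinBV

/-- The Bombieri–Vinogradov type estimate: the statement with `max_{a,k ∈ ℤ}` is
formulated by quantifying over all choice functions `a k : ℕ → ℤ`. -/
theorem tuxanidy_panario_BV_variant (g : ℕ) (hg : 2 ≤ g) (ε : ℝ) (hε : 0 < ε) :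
    ∃ c C : ℝ, 0 < c ∧ 0 < C ∧
      ∀ N : ℕ, ∀ Q : ℝ, 1 ≤ Q → Q ≤ (g : ℝ) ^ ((4 / 5 - ε) * N) →
        ∀ a k : ℕ → ℤ,
          ∑ q ∈ (Finset.Icc 1 ⌊Q⌋₊).filter (fun q => Nat.gcd q (g ^ 3 - g) = 1),
            (q : ℝ) ^ (-(1 / 2 : ℝ)) *
              |((PalinsKgMod g (2 * N + 1) (k q) (a q) q).card : ℝ) -
                (1 / (q : ℝ)) * ((PalinsKg g (2 * N + 1) (k q)).card : ℝ)| ≤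
          C * (g : ℝ) ^ ((N : ℝ) - c * Real.sqrt N) := by
  obtain ⟨C₁, hC₁, hlarge⟩ := exists_block_le hg
  obtain ⟨ρ, hρ0, hρ1, hsmall⟩ := exists_small_le hg
  have hG0 : (0 : ℝ) < g := by positivity
  have hG1 : (1 : ℝ) < g := by exact_mod_cast (by omega : 1 < g)
  set G : ℝ := (g : ℝ) with hG
  have hlogG : 0 < Real.log G := Real.log_pos hG1
  set κ : ℝ := -Real.log ρ / Real.log G with hκ
  have hκ0 : 0 < κ := div_pos (neg_pos.mpr (Real.log_neg hρ0 hρ1)) hlogG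
  have hρκ : ρ = G ^ (-κ) := by
    rw [Real.rpow_def_of_pos hG0, hκ]
    have : Real.log G * -(-Real.log ρ / Real.log G) = Real.log ρ := by field_simp
    rw [this, Real.exp_log hρ0]
  -- `γ` balances the number `g ^ (γ √N)` of small moduli against the saving `g ^ (-κ √N / γ)`
  set γ : ℝ := min 1 (κ / 4) with hγ
  have hγ0 : 0 < γ := lt_min one_pos (by positivity)
  have hγκ : 4 * γ ^ 2 ≤ κ := by
    have h1 : γ ≤ 1 := min_le_left _ _
    have h2 : γ ≤ κ / 4 := min_le_right _ _
    nlinarith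
  set x : ℝ := G ^ (-(1 / 8) : ℝ) with hx
  have hx0 : 0 < x := by positivity
  have hx1 : x < 1 := Real.rpow_lt_one_of_one_lt_of_neg hG1 (by norm_num)
  have hx_pos : 0 < 1 - x := by linarith
  refine ⟨γ / 8, G ^ (6 + κ) + C₁ / (1 - x), by positivity, by positivity,
    fun N Q hQ1 hQ a k => ?_⟩
  set s := Real.sqrt N with hs
  have hs0 : 0 ≤ s := Real.sqrt_nonneg _
  have hss : s ^ 2 = N := Real.sq_sqrt (by positivity)
  set J := ⌈γ * s⌉₊ with hJ
  have hJ1 : γ * s ≤ J := Nat.le_ceil _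
  have hJ2 : (J : ℝ) < γ * s + 1 := Nat.ceil_lt_add_one (by positivity)
  set F := (Finset.Icc 1 ⌊Q⌋₊).filter (fun q => Nat.gcd q (g ^ 3 - g) = 1) with hF
  set E : ℕ → ℝ := fun q => (q : ℝ) ^ (-(1 / 2 : ℝ)) *
              |((PalinsKgMod g (2 * N + 1) (k q) (a q) q).card : ℝ) -
                (1 / (q : ℝ)) * ((PalinsKg g (2 * N + 1) (k q)).card : ℝ)| with hE
  change ∑ q ∈ F, E q ≤ _
  rw [← Finset.sum_filter_add_sum_filter_not F (fun q => q < g ^ J), add_mul]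
  refine add_le_add ?_ ?_
  · rcases Nat.eq_zero_or_pos N with hN | hN
    · have hJ0 : J = 0 := by simp [hJ, hs, hN]
      have hempty : F.filter (fun q => q < g ^ J) = ∅ := by
        refine Finset.filter_eq_empty_iff.mpr fun q hq => ?_
        simp only [hF, Finset.mem_filter, Finset.mem_Icc] at hq
        rw [hJ0, pow_zero]; omega
      rw [hempty, Finset.sum_empty]
      positivity
    · refine (hsmall N J hN _ (fun q hq => ?_) a k).trans ?_
      · simp only [hF, Finset.mem_filter, Finset.mem_Icc] at hq
        exact ⟨hq.1.2, hq.1.1.1, hq.2⟩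
      · set B := (N - 1) / (J + 1) with hB
        have hNB : N ≤ (B + 1) * (J + 1) := by
          have := Nat.lt_div_mul_add (a := N - 1) (b := J + 1) (by omega)
          rw [← hB] at this
          have e1 : (B + 1) * (J + 1) = B * (J + 1) + (J + 1) := by ring
          omega
        have hNB' : s ^ 2 ≤ (B + 1) * (γ * s + 2) := by
          have h1 : (N : ℝ) ≤ (B + 1) * (J + 1) := by exact_mod_cast hNB
          rw [hss]
          exact h1.trans (mul_le_mul_of_nonneg_left (by linarith) (by positivity))
        have hkey : 2 * (γ * s) - 4 ≤ κ * (B + 1) := by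
          have hz : 0 < γ * s + 2 := by positivity
          have h1 : 4 * (γ * s) ^ 2 ≤ κ * (B + 1) * (γ * s + 2) := by
            calc 4 * (γ * s) ^ 2 = 4 * γ ^ 2 * s ^ 2 := by ring
              _ ≤ κ * ((B + 1) * (γ * s + 2)) := by gcongr
              _ = _ := by ring
          refine le_of_mul_le_mul_right ?_ hz
          nlinarith [sq_nonneg (γ * s)]
        rw [hρκ]
        simp only [← Real.rpow_natCast, ← Real.rpow_add hG0, ← Real.rpow_mul hG0.le]
        refine Real.rpow_le_rpow_of_exponent_le hG1.le ?_
        push_cast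
        have := mul_nonneg hγ0.le hs0
        linarith
  · have hlog : ∀ q ∈ F.filter (fun q => ¬ q < g ^ J),
        Nat.log g q ∈ Finset.Ico J (N + 1) ∧ 5 * Nat.log g q ≤ 4 * N := by
      intro q hq
      simp only [hF, Finset.mem_filter, Finset.mem_Icc, not_lt] at hq
      obtain ⟨⟨⟨hq1, hqQ⟩, _⟩, hqJ⟩ := hq
      have h1 : J ≤ Nat.log g q := Nat.le_log_of_pow_le (by omega) hqJ
      have h2 : g ^ Nat.log g q ≤ q := Nat.pow_log_le_self g (by omega)
      have h3 : (q : ℝ) ≤ Q := (Nat.le_floor_iff (by linarith)).mp hqQ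
      have h4 : G ^ ((Nat.log g q : ℕ) : ℝ) ≤ G ^ ((4 / 5 - ε) * N) := by
        refine le_trans ?_ (h3.trans hQ)
        rw [Real.rpow_natCast, hG]; exact_mod_cast h2
      rw [Real.rpow_le_rpow_left_iff hG1] at h4
      have h5 : (5 * Nat.log g q : ℝ) ≤ 4 * N := by
        have : 0 ≤ ε * N := by positivity
        linarith
      have h6 : 5 * Nat.log g q ≤ 4 * N := by exact_mod_cast h5
      exact ⟨Finset.mem_Ico.mpr ⟨h1, by omega⟩, h6⟩
    rw [← Finset.sum_fiberwise_of_maps_to (fun q hq => (hlog q hq).1)]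
    calc _ ≤ ∑ j ∈ Finset.Ico J (N + 1), C₁ * G ^ (N : ℝ) * x ^ j := by
          refine Finset.sum_le_sum fun j _ => ?_
          by_cases hj : 5 * j ≤ 4 * N
          · refine hlarge N j hj _ (fun q hq => ?_) a k
            rw [Finset.mem_filter] at hq
            obtain ⟨hq, hqj⟩ := hq
            simp only [hF, Finset.mem_filter, Finset.mem_Icc] at hq
            rw [← hqj]
            exact ⟨hq.1.2, Nat.pow_log_le_self g (by omega),
              Nat.lt_pow_succ_log_self (by omega) q⟩
          · rw [Finset.sum_eq_zero]
            · positivity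
            · intro q hq
              rw [Finset.mem_filter] at hq
              exact absurd (hq.2 ▸ (hlog q hq.1).2) hj
      _ = C₁ * G ^ (N : ℝ) * ∑ j ∈ Finset.Ico J (N + 1), x ^ j := by rw [Finset.mul_sum]
      _ ≤ C₁ * G ^ (N : ℝ) * (x ^ J / (1 - x)) := by
          gcongr
          exact geom_sum_Ico_le_of_lt_one hx0.le hx1
      _ = C₁ / (1 - x) * (G ^ (N : ℝ) * x ^ J) := by ring
      _ ≤ _ := by
          gcongr
          rw [hx, ← Real.rpow_natCast, ← Real.rpow_mul hG0.le, ← Real.rpow_add hG0]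
          refine Real.rpow_le_rpow_of_exponent_le hG1.le ?_
          linarith
end

section
/- Let g ≥ 2 be an integer. There exists a constant C > 0 depending only on g such that for every integer N ≥ 1 and every positive divisor d of g³−g: |#Π(2N+1; 0, d) − (1 + gcd(d, g²−1, 2)/(g−1))·(1 − gcd(d, g)/g)·(1/d)·#Π(2N+1)| ≤ C. -/
/-! The lowest `N` digits of a palindrome `n` of length `2N+1`, read as a number `k < g ^ N` with
`g ∤ k`, and its middle digit `c` are free and determine `n` (`card_filter_Palins`).
Write `d = e * f` with `e = gcd(d, g)` and `f = gcd(d, g² - 1)`. Modulo `e` one has `n ≡ k`, and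
modulo `f`, where `g² ≡ 1`, the two halves contribute equally, so `n ≡ 2k + c g ^ N`. Hence
`d ∣ n` if and only if `e ∣ k` and `f ∣ 2k + c g ^ N` (`dvd_palOf_iff`).

For fixed `c`, the `k < g ^ N` satisfying these two conditions but not `g ∣ k` are counted by
subtracting two counts of integers in a single residue class, modulo `e * f'` and modulo `g * f'`,
where `f' = f / gcd(f, 2)` (`abs_class_count_sub_le`); each has error at most `1`. The congruence
modulo `f` is solvable for all `c` if `f` is odd, and for the `(g + 1) / 2` even values of `c` if
`f` is even (`g` is then odd). In both cases the number of good `c` times `gcd(f, 2)` is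
`g - 1 + gcd(f, 2)` (`card_good_mul`), which gives the main term, and the total error is
at most `2 g`. -/

open Finset

/-- `Π(N; a, q)`: palindromes of length `N` congruent to `a` modulo `q`. -/
def PalinsMod (g N : ℕ) (a : ℤ) (q : ℕ) : Finset ℕ :=
  (Palins g N).filter (fun n => (n : ℤ) % (q : ℤ) = a % (q : ℤ))

/-! ### Palindromes of odd length and their halves -/

/-- The number of length `2N+1` whose low `N` digits are those of `k` (padded with zeros),
whose middle digit is `c`, and whose high `N` digits mirror the low ones. -/
def palOf (g N k c : ℕ) : ℕ :=
  Nat.ofDigits g (g.digitsAppend N k ++ c :: (g.digitsAppend N k).reverse)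

lemma ofDigits_digitsAppend (g N k : ℕ) : Nat.ofDigits g (g.digitsAppend N k) = k := by
  rw [Nat.digitsAppend, Nat.ofDigits_append_replicate_zero, Nat.ofDigits_digits]

lemma digits_palOf {g N k c : ℕ} (hg : 2 ≤ g) (hc : c < g) (hk : ¬ g ∣ k) :
    Nat.digits g (palOf g N k c) =
      g.digitsAppend N k ++ c :: (g.digitsAppend N k).reverse := by
  have h1 : ∀ x ∈ g.digitsAppend N k, x < g := fun x hx =>
    Nat.lt_of_mem_digitsAppend (by omega) N x hx
  have h2 := ofDigits_digitsAppend g N k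
  unfold palOf
  generalize g.digitsAppend N k = l at h1 h2
  apply Nat.digits_ofDigits g (by omega)
  · intro x hx
    simp only [List.mem_append, List.mem_cons, List.mem_reverse] at hx
    rcases hx with hx | rfl | hx
    · exact h1 x hx
    · exact hc
    · exact h1 x hx
  · intro _
    cases l with
    | nil => simp at h2; subst h2; simp at hk
    | cons a t =>
      have : a ≠ 0 := by
        rintro rfl
        apply hk
        rw [← h2, Nat.ofDigits_cons]
        simp
      simpa using this

lemma palindrome_split {l : List ℕ} {N : ℕ} (hl : l.length = 2 * N + 1) (hr : l.reverse = l) :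
    ∃ c, l = l.take N ++ c :: (l.take N).reverse := by
  have hN : N < l.length := by omega
  refine ⟨l[N], ?_⟩
  have h1 : (l.take N).reverse = l.drop (N + 1) := by
    rw [List.reverse_take, hr]
    congr 1
    omega
  rw [h1, List.getElem_cons_drop, List.take_append_drop]

/-- A palindrome of length `2N+1` is determined by its lowest `N` digits and its middle digit; these
can be prescribed freely, except that the lowest digit, which is also the leading one, is nonzero. -/
lemma card_filter_Palins {g N : ℕ} (hg : 2 ≤ g) (hN : 1 ≤ N) (p : ℕ → Prop) [DecidablePred p] :
    ((Palins g (2 * N + 1)).filter p).card =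
      ∑ c ∈ range g, ((range (g ^ N)).filter
        (fun k => ¬ g ∣ k ∧ p (palOf g N k c))).card := by
  rw [← Finset.card_sigma]
  symm
  apply Finset.card_bij (fun x _ => palOf g N x.2 x.1)
  · rintro ⟨c, k⟩ h
    simp only [mem_sigma, mem_range, mem_filter] at h
    obtain ⟨hc, hk, hgk, hp⟩ := h
    have hd := digits_palOf (N := N) hg hc hgk
    have hlen : (Nat.digits g (palOf g N k c)).length = 2 * N + 1 := by
      rw [hd]
      simp [Nat.length_digitsAppend (by omega : 1 < g) N hk]
      omega
    simp only [Palins, mem_filter, mem_Ico]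
    refine ⟨⟨⟨?_, ?_⟩, hlen, ?_⟩, hp⟩
    · rw [Nat.one_le_iff_ne_zero]
      intro h0
      rw [h0] at hlen
      simp at hlen
    · rw [← hlen]
      exact Nat.lt_base_pow_length_digits (by omega)
    · rw [hd]; simp
  · rintro ⟨c, k⟩ h ⟨c', k'⟩ h' heq
    simp only [mem_sigma, mem_range, mem_filter] at h h'
    have hd := digits_palOf (N := N) hg h.1 h.2.2.1
    have hd' := digits_palOf (N := N) hg h'.1 h'.2.2.1
    simp only at heq
    rw [heq, hd'] at hd
    have hl := Nat.length_digitsAppend (by omega : 1 < g) N h.2.1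
    have hl' := Nat.length_digitsAppend (by omega : 1 < g) N h'.2.1
    obtain ⟨e1, e2⟩ := List.append_inj hd (by rw [hl, hl'])
    have hk : k' = k := by
      rw [← ofDigits_digitsAppend g N k, ← ofDigits_digitsAppend g N k', e1]
    have hc : c' = c := (List.cons.inj e2).1
    rw [hk, hc]
  · intro n hn
    simp only [Palins, mem_filter, mem_Ico] at hn
    obtain ⟨⟨⟨hn1, -⟩, hlen, hrev⟩, hp⟩ := hn
    obtain ⟨c, hc⟩ := palindrome_split hlen hrev
    have hlt : ∀ x ∈ Nat.digits g n, x < g := fun x hx => Nat.digits_lt_base (by omega) hx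
    have hl : ((Nat.digits g n).take N).length = N := by
      rw [List.length_take, hlen]; omega
    have hlast : ∀ h : Nat.digits g n ≠ [], (Nat.digits g n).getLast h ≠ 0 := fun _ =>
      Nat.getLast_digit_ne_zero g (m := n) (by omega)
    have hof := Nat.ofDigits_digits g n
    generalize (Nat.digits g n).take N = l at hc hl
    generalize Nat.digits g n = L at *
    subst hc
    have hllt : ∀ x ∈ l, x < g := fun x hx => hlt x (by simp [hx])
    have hk : Nat.ofDigits g l < g ^ N := Nat.mapsTo_ofDigits (by omega) N ⟨hl, hllt⟩
    have hpad : g.digitsAppend N (Nat.ofDigits g l) = l :=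
      (Nat.setInvOn_digitsAppend_ofDigits (by omega : 1 < g) N).1 ⟨hl, hllt⟩
    have hpal : palOf g N (Nat.ofDigits g l) c = n := by rw [palOf, hpad, hof]
    refine ⟨⟨c, Nat.ofDigits g l⟩, ?_, hpal⟩
    simp only [mem_sigma, mem_range, mem_filter]
    refine ⟨hlt c (by simp), hk, ?_, by rwa [hpal]⟩
    cases l with
    | nil => simp at hl; omega
    | cons a t =>
      have ha : a ≠ 0 := by simpa using hlast (by simp)
      have hag : a < g := hllt a (by simp)
      rw [Nat.ofDigits_cons, ← (Nat.dvd_add_iff_left (Dvd.intro _ rfl))]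
      exact fun h => ha (Nat.eq_zero_of_dvd_of_lt h hag)

/-! ### Residues of palindromes -/

lemma palOf_eq (g N k c : ℕ) (hg : 2 ≤ g) (hk : k < g ^ N) :
    palOf g N k c =
      k + g ^ N * c + g ^ (N + 1) * Nat.ofDigits g (g.digitsAppend N k).reverse := by
  rw [palOf, Nat.ofDigits_append, ofDigits_digitsAppend,
    Nat.length_digitsAppend (by omega) N hk, Nat.ofDigits_cons]
  ring

/-- Modulo a divisor of `g² - 1` the mirrored half of a palindrome contributes as much as
the half itself, since `g ^ (2N - i) ≡ g ^ i`. -/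
lemma mirror_cast {f g : ℕ} (h : (g : ZMod f) ^ 2 = 1) (l : List ℕ) :
    (g : ZMod f) ^ (l.length + 1) * (Nat.ofDigits g l.reverse : ℕ) = (Nat.ofDigits g l : ℕ) := by
  induction l with
  | nil => simp
  | cons a t ih =>
    rw [List.reverse_cons, Nat.ofDigits_append, Nat.ofDigits_singleton, Nat.ofDigits_cons,
      List.length_cons, List.length_reverse]
    push_cast
    have h2 : (g : ZMod f) ^ (t.length + 1 + 1) * (g : ZMod f) ^ t.length = 1 := by
      rw [← pow_add, show t.length + 1 + 1 + t.length = 2 * (t.length + 1) by ring, pow_mul, h,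
        one_pow]
    calc _ = (g : ZMod f) * ((g : ZMod f) ^ (t.length + 1) * (Nat.ofDigits g t.reverse : ℕ))
          + ((g : ZMod f) ^ (t.length + 1 + 1) * (g : ZMod f) ^ t.length) * a := by
            push_cast; ring
      _ = _ := by rw [ih, h2]; push_cast; ring

lemma dvd_palOf_iff {g N k c e f : ℕ} (hg : 2 ≤ g) (hN : 1 ≤ N) (hk : k < g ^ N)
    (he : e ∣ g) (hf : f ∣ g ^ 2 - 1) (hef : Nat.Coprime e f) :
    e * f ∣ palOf g N k c ↔ e ∣ k ∧ f ∣ 2 * k + c * g ^ N := by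
  have hE : e ∣ palOf g N k c ↔ e ∣ k := by
    rw [palOf_eq g N k c hg hk, add_assoc]
    refine (Nat.dvd_add_iff_left ?_).symm
    have h1 : e ∣ g ^ N := dvd_pow he (by omega)
    exact dvd_add (h1.mul_right _) ((h1.trans (pow_dvd_pow g (by omega))).mul_right _)
  have hF : f ∣ palOf g N k c ↔ f ∣ 2 * k + c * g ^ N := by
    have hg1 : (g : ZMod f) ^ 2 = 1 := by
      have h1 : ((g ^ 2 - 1 : ℕ) : ZMod f) = 0 := (ZMod.natCast_eq_zero_iff _ _).2 hf
      rw [Nat.cast_sub (Nat.one_le_pow _ _ (by omega))] at h1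
      push_cast at h1
      exact sub_eq_zero.1 h1
    have hm := mirror_cast hg1 (g.digitsAppend N k)
    rw [Nat.length_digitsAppend (by omega) N hk, ofDigits_digitsAppend] at hm
    rw [← ZMod.natCast_eq_zero_iff, ← ZMod.natCast_eq_zero_iff, palOf_eq g N k c hg hk]
    push_cast at hm ⊢
    rw [hm]
    constructor <;> intro h <;> rw [← h] <;> ring
  rw [← hE, ← hF]
  exact ⟨fun h => ⟨(Dvd.intro _ rfl).trans h, (Dvd.intro_left _ rfl).trans h⟩,
    fun h => hef.mul_dvd_of_dvd_of_dvd h.1 h.2⟩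

/-! ### Counting in residue classes -/

lemma abs_count_modEq_sub_le (n m s : ℕ) (hm : 0 < m) :
    |((((range n).filter (fun k => k ≡ s [MOD m])).card : ℕ) : ℝ) - (n : ℝ) / m| ≤ 1 := by
  rw [← Nat.count_eq_card_filter_range, Nat.count_modEq_card n hm s]
  have hm' : (0 : ℝ) < m := by exact_mod_cast hm
  have h1 : (n : ℝ) / m = (n / m : ℕ) + ((n % m : ℕ) : ℝ) / m := by
    rw [div_eq_iff hm'.ne', add_mul, div_mul_cancel₀ _ hm'.ne']
    exact_mod_cast (Nat.div_add_mod' n m).symm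
  have h2 : 0 ≤ ((n % m : ℕ) : ℝ) / m := by positivity
  have h3 : ((n % m : ℕ) : ℝ) / m ≤ 1 := by
    rw [div_le_one hm']
    exact_mod_cast (Nat.mod_lt n hm).le
  rw [h1, abs_le]
  split_ifs <;> push_cast <;> constructor <;> linarith

lemma dvd_two_mul_add_iff {f a : ℕ} (hf : 0 < f) (ha : f % 2 = 1 ∨ a % 2 = 0) :
    ∃ r, ∀ k, f ∣ 2 * k + a ↔ k ≡ r [MOD f / Nat.gcd f 2] := by
  -- `r` solves `2 * r + a = a * f`
  obtain ⟨r, hr⟩ : ∃ r, f ∣ 2 * r + a := by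
    rcases ha with h | h
    · obtain ⟨m, rfl⟩ : ∃ m, f = 2 * m + 1 := ⟨f / 2, by omega⟩
      exact ⟨a * m, a, by ring⟩
    · obtain ⟨b, rfl⟩ : ∃ b, a = 2 * b := ⟨a / 2, by omega⟩
      obtain ⟨m, rfl⟩ : ∃ m, f = m + 1 := ⟨f - 1, by omega⟩
      exact ⟨b * m, 2 * b, by ring⟩
  refine ⟨r, fun k => ?_⟩
  have h1 : f ∣ 2 * k + a ↔ 2 * k ≡ 2 * r [MOD f] := by
    rw [← Nat.modEq_zero_iff_dvd] at hr ⊢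
    constructor
    · intro h
      exact Nat.ModEq.add_right_cancel' a (h.trans hr.symm)
    · intro h
      exact (h.add_right a).trans hr
  rw [h1]
  rcases Nat.mod_two_eq_zero_or_one f with h | h
  · obtain ⟨m, rfl⟩ : ∃ m, f = 2 * m := ⟨f / 2, by omega⟩
    have : Nat.gcd (2 * m) 2 = 2 := Nat.gcd_eq_right (by simp)
    rw [this, Nat.mul_div_cancel_left _ two_pos]
    exact Nat.ModEq.mul_left_cancel_iff' two_ne_zero
  · have : Nat.gcd f 2 = 1 := Nat.Coprime.symm ((Nat.coprime_two_left).2 (Nat.odd_iff.2 h))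
    rw [this, Nat.div_one]
    exact ⟨fun h => Nat.ModEq.cancel_left_of_coprime this h, fun h => h.mul_left 2⟩

lemma abs_class_count_sub_le {n x f a : ℕ} (hx : 0 < x) (hf : 0 < f) (hxf : Nat.Coprime x f) :
    |(((range n).filter (fun k => x ∣ k ∧ f ∣ 2 * k + a)).card : ℝ) -
      (if f % 2 = 1 ∨ a % 2 = 0 then (n : ℝ) / ((x : ℝ) * (f / Nat.gcd f 2 : ℕ)) else 0)| ≤ 1 := by
  split_ifs with h
  · obtain ⟨r, hr⟩ := dvd_two_mul_add_iff hf h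
    have hdvd : Nat.gcd f 2 ∣ f := Nat.gcd_dvd_left f 2
    have hcop : Nat.Coprime x (f / Nat.gcd f 2) :=
      hxf.coprime_dvd_right (Nat.div_dvd_of_dvd hdvd)
    have hf' : 0 < f / Nat.gcd f 2 :=
      Nat.div_pos (Nat.le_of_dvd hf hdvd) (Nat.gcd_pos_of_pos_left _ hf)
    obtain ⟨s, hs0, hsr⟩ := Nat.chineseRemainder hcop 0 r
    have hiff : ∀ k, (x ∣ k ∧ f ∣ 2 * k + a) ↔ k ≡ s [MOD x * (f / Nat.gcd f 2)] := by
      intro k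
      rw [hr k, ← Nat.modEq_zero_iff_dvd, ← Nat.modEq_and_modEq_iff_modEq_mul hcop]
      exact ⟨fun h => ⟨h.1.trans hs0.symm, h.2.trans hsr.symm⟩,
        fun h => ⟨h.1.trans hs0, h.2.trans hsr⟩⟩
    simp only [hiff]
    have := abs_count_modEq_sub_le n (x * (f / Nat.gcd f 2)) s (by positivity)
    rwa [Nat.cast_mul] at this
  · have : ((range n).filter (fun k => x ∣ k ∧ f ∣ 2 * k + a)) = ∅ := by
      apply Finset.filter_eq_empty_iff.2
      rintro k - ⟨-, hk⟩
      have h2 : 2 ∣ f := by omega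
      have := h2.trans hk
      omega
    rw [this]
    simp

lemma card_filter_not_dvd {n e g : ℕ} (heg : e ∣ g) (p : ℕ → Prop) [DecidablePred p] :
    (((range n).filter (fun k => ¬ g ∣ k ∧ e ∣ k ∧ p k)).card : ℝ) =
      (((range n).filter (fun k => e ∣ k ∧ p k)).card : ℝ) -
      (((range n).filter (fun k => g ∣ k ∧ p k)).card : ℝ) := by
  have h := Finset.card_filter_add_card_filter_not
    (s := (range n).filter (fun k => e ∣ k ∧ p k)) (fun k => g ∣ k)
  rw [Finset.filter_filter, Finset.filter_filter] at h
  have h1 : (range n).filter (fun k => (e ∣ k ∧ p k) ∧ g ∣ k) =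
      (range n).filter (fun k => g ∣ k ∧ p k) :=
    Finset.filter_congr fun k _ => ⟨fun h => ⟨h.2, h.1.2⟩, fun h => ⟨⟨heg.trans h.1, h.2⟩, h.1⟩⟩
  have h2 : (range n).filter (fun k => (e ∣ k ∧ p k) ∧ ¬ g ∣ k) =
      (range n).filter (fun k => ¬ g ∣ k ∧ e ∣ k ∧ p k) :=
    Finset.filter_congr fun k _ => and_comm
  rw [h1, h2] at h
  rw [← h]
  push_cast
  ring

/-- The number of middle digits `c` for which `2 k ≡ -c g ^ N` is solvable modulo `f`. -/
lemma card_good_mul {g N f : ℕ} (hg : 2 ≤ g) (hgf : Nat.Coprime g f) :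
    ((range g).filter (fun c => f % 2 = 1 ∨ (c * g ^ N) % 2 = 0)).card * Nat.gcd f 2 =
      g - 1 + Nat.gcd f 2 := by
  rcases Nat.mod_two_eq_zero_or_one f with h | h
  · have hgo : Odd g := by
      rw [← Nat.coprime_two_right]
      exact hgf.coprime_dvd_right (Nat.dvd_of_mod_eq_zero h)
    have h1 : (range g).filter (fun c => f % 2 = 1 ∨ (c * g ^ N) % 2 = 0) =
        (range g).filter (fun c => c ≡ 0 [MOD 2]) := by
      apply Finset.filter_congr
      intro c _
      have hG := hgo.pow (n := N)
      rw [← Nat.even_iff, Nat.even_mul, ← Nat.not_odd_iff_even (n := g ^ N), Nat.even_iff]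
      simp [h, hG, Nat.ModEq]
    have h2 : Nat.gcd f 2 = 2 := Nat.gcd_eq_right (Nat.dvd_of_mod_eq_zero h)
    rw [h1, h2, ← Nat.count_eq_card_filter_range, Nat.count_modEq_card g two_pos]
    have := Nat.odd_iff.1 hgo
    rw [if_pos (by omega)]
    omega
  · have h2 : Nat.gcd f 2 = 1 := Nat.Coprime.symm ((Nat.coprime_two_left).2 (Nat.odd_iff.2 h))
    simp [h, h2]
    omega

lemma card_Palins {g N : ℕ} (hg : 2 ≤ g) (hN : 1 ≤ N) :
    ((Palins g (2 * N + 1)).card : ℝ) = ((g : ℝ) - 1) * (g : ℝ) ^ N := by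
  have h := card_filter_Palins hg hN (fun _ => True)
  simp only [Finset.filter_true, and_true, Finset.sum_const, Finset.card_range, smul_eq_mul] at h
  obtain ⟨M, rfl⟩ : ∃ M, N = M + 1 := ⟨N - 1, by omega⟩
  have h1 := Finset.card_filter_add_card_filter_not (s := range (g ^ (M + 1))) (fun k => g ∣ k)
  have h2 : ((range (g ^ (M + 1))).filter (fun k => g ∣ k)).card = g ^ M := by
    have := Nat.count_modEq_card (g ^ (M + 1)) (by omega : 0 < g) 0
    rw [Nat.count_eq_card_filter_range] at this
    simp only [Nat.modEq_zero_iff_dvd] at this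
    rw [this, pow_succ, Nat.mul_div_cancel _ (by omega)]
    simp
  rw [h2, Finset.card_range] at h1
  have h1' : (g : ℝ) ^ M + (((range (g ^ (M + 1))).filter (fun k => ¬ g ∣ k)).card : ℝ)
      = (g : ℝ) ^ (M + 1) := by exact_mod_cast h1
  rw [h]
  push_cast
  rw [← eq_sub_iff_add_eq'] at h1'
  rw [h1']
  ring

theorem palindrome_AP_divisor_of_g3_g (g : ℕ) (hg : 2 ≤ g) :
    ∃ C : ℝ, 0 < C ∧ ∀ N : ℕ, 1 ≤ N → ∀ d : ℕ, 0 < d → d ∣ g ^ 3 - g →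
      |((PalinsMod g (2 * N + 1) 0 d).card : ℝ) -
          (1 + (Nat.gcd d (Nat.gcd (g ^ 2 - 1) 2) : ℝ) / ((g : ℝ) - 1)) *
            (1 - (Nat.gcd d g : ℝ) / (g : ℝ)) * (1 / (d : ℝ)) *
            ((Palins g (2 * N + 1)).card : ℝ)| ≤ C := by
  have hg' : (2 : ℝ) ≤ g := by exact_mod_cast hg
  refine ⟨2 * g, by linarith, ?_⟩
  intro N hN d hd hdvd
  have hcop : Nat.Coprime g (g ^ 2 - 1) := by
    have h1 : Nat.Coprime (g ^ 2 - 1 + 1) (g ^ 2 - 1) := by simp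
    rw [Nat.sub_add_cancel (Nat.one_le_pow _ _ (by omega))] at h1
    exact h1.coprime_dvd_left (dvd_pow_self g two_ne_zero)
  have hfac : g ^ 3 - g = g * (g ^ 2 - 1) := by
    rw [Nat.mul_sub, mul_one]
    congr 1
    ring
  have hdef : d = Nat.gcd d g * Nat.gcd d (g ^ 2 - 1) := by
    rw [← hcop.gcd_mul d, ← hfac]
    exact (Nat.gcd_eq_left hdvd).symm
  have hγ : Nat.gcd d (Nat.gcd (g ^ 2 - 1) 2) = Nat.gcd (Nat.gcd d (g ^ 2 - 1)) 2 :=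
    (Nat.gcd_assoc _ _ _).symm
  have he0 : 0 < Nat.gcd d g := Nat.gcd_pos_of_pos_left _ hd
  have hf0 : 0 < Nat.gcd d (g ^ 2 - 1) := Nat.gcd_pos_of_pos_left _ hd
  have heg : Nat.gcd d g ∣ g := Nat.gcd_dvd_right _ _
  have hfg : Nat.gcd d (g ^ 2 - 1) ∣ g ^ 2 - 1 := Nat.gcd_dvd_right _ _
  rw [hγ, card_Palins hg hN]
  generalize Nat.gcd d g = e at *
  generalize Nat.gcd d (g ^ 2 - 1) = f at *
  have hgf : Nat.Coprime g f := hcop.coprime_dvd_right hfg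
  have hef : Nat.Coprime e f := hgf.coprime_dvd_left heg
  have hcard : ((PalinsMod g (2 * N + 1) 0 d).card : ℝ) =
      ∑ c ∈ range g,
        ((((range (g ^ N)).filter (fun k => e ∣ k ∧ f ∣ 2 * k + c * g ^ N)).card : ℝ) -
        (((range (g ^ N)).filter (fun k => g ∣ k ∧ f ∣ 2 * k + c * g ^ N)).card : ℝ)) := by
    have h1 : PalinsMod g (2 * N + 1) 0 d = (Palins g (2 * N + 1)).filter (fun n => e * f ∣ n) := by
      apply Finset.filter_congr
      intro n _
      rw [Int.zero_emod, ← Int.dvd_iff_emod_eq_zero, Int.natCast_dvd_natCast, hdef]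
    rw [h1, card_filter_Palins hg hN, Nat.cast_sum]
    apply Finset.sum_congr rfl
    intro c _
    rw [← card_filter_not_dvd heg]
    congr 2
    apply Finset.filter_congr
    intro k hk
    rw [dvd_palOf_iff hg hN (mem_range.1 hk) heg hfg hef]
  have hmain : (1 + (Nat.gcd f 2 : ℝ) / ((g : ℝ) - 1)) * (1 - (e : ℝ) / (g : ℝ)) * (1 / (d : ℝ)) *
      (((g : ℝ) - 1) * (g : ℝ) ^ N) =
      ∑ c ∈ range g,
        ((if f % 2 = 1 ∨ (c * g ^ N) % 2 = 0 then
            ((g ^ N : ℕ) : ℝ) / ((e : ℝ) * (f / Nat.gcd f 2 : ℕ)) else 0) -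
         (if f % 2 = 1 ∨ (c * g ^ N) % 2 = 0 then
            ((g ^ N : ℕ) : ℝ) / ((g : ℝ) * (f / Nat.gcd f 2 : ℕ)) else 0)) := by
    rw [Finset.sum_sub_distrib, ← Finset.sum_filter, ← Finset.sum_filter, Finset.sum_const,
      Finset.sum_const]
    have hM := card_good_mul (N := N) hg hgf
    generalize ((range g).filter (fun c => f % 2 = 1 ∨ (c * g ^ N) % 2 = 0)).card = M at *
    have hγ0 : 0 < Nat.gcd f 2 := Nat.gcd_pos_of_pos_left _ hf0
    rw [Nat.cast_div (Nat.gcd_dvd_left f 2) (by positivity), hdef]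
    generalize Nat.gcd f 2 = γ at *
    have hM' : (M : ℝ) * γ = g - 1 + γ := by
      rw [← Nat.cast_mul, hM, Nat.cast_add, Nat.cast_sub (by omega)]
      simp
    have h1 : (g : ℝ) - 1 ≠ 0 := by linarith
    have h2 : (g : ℝ) ≠ 0 := by linarith
    have h3 : (e : ℝ) ≠ 0 := by positivity
    have h4 : (f : ℝ) ≠ 0 := by positivity
    have h5 : (γ : ℝ) ≠ 0 := by positivity
    have h6 : ((g : ℝ) - 1) * (1 + (γ : ℝ) / ((g : ℝ) - 1)) = M * γ := by
      rw [hM']; field_simp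
    calc _ = (((g : ℝ) - 1) * (1 + (γ : ℝ) / ((g : ℝ) - 1))) *
          ((1 - (e : ℝ) / (g : ℝ)) * (1 / ((e * f : ℕ) : ℝ)) * (g : ℝ) ^ N) := by ring
      _ = _ := by
        rw [h6]
        push_cast
        simp only [nsmul_eq_mul]
        field_simp
  rw [hcard, hmain, ← Finset.sum_sub_distrib]
  refine (Finset.abs_sum_le_sum_abs _ _).trans ?_
  calc _ ≤ ∑ _c ∈ range g, (2 : ℝ) := by
        apply Finset.sum_le_sum
        intro c _
        have h1 := abs_le.1 (abs_class_count_sub_le (n := g ^ N) (a := c * g ^ N) he0 hf0 hef)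
        have h2 := abs_le.1 (abs_class_count_sub_le (n := g ^ N) (a := c * g ^ N)
          (by omega : 0 < g) hf0 hgf)
        rw [abs_le]
        constructor <;> linarith
    _ = 2 * g := by simp [mul_comm]
end
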